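/- arXiv:1312.5473 — 3 statements merged into one kernel-verified Lean document; each statement's English description precedes it below -/
import Mathlib

section
/- Reverse Moser iteration for superharmonic functions: let p, q ∈ (1,∞] satisfy 1/p + 1/q < 2/d and set p∗ := p/(p−1). There exist C₆ < ∞ and κ > 0, depending only on d, p, q, C_reg and C_riso, such that for every choice of edge weights ω, every x₀ ∈ V, n ≥ 1, every u : V → (0,∞) with (L_Y^ω u)(x) ≤ 0 for all x ∈ B(x₀,n), every β ∈ (0, p∗/2), every α ∈ (0, β/2) and all σ′, σ with 1/2 ≤ σ′ < σ ≤ 1: ‖u‖_{β,B(x₀,σ′n)} ≤ (C₆·max{1, ‖μ^ω‖_{p,B(x₀,n)}·‖ν^ω‖_{q,B(x₀,n)}}/(σ−σ′)²)^{κ·(1/α − 1/β)}·‖u‖_{α,B(x₀,σn)}. -/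
open Finset MeasureTheory
open scoped ENNReal

noncomputable section

namespace RCM

variable {V : Type*}

/-- `μ^ω(x)`, the sum of the weights of edges incident to `x`. -/
def mu (nbr : V → Finset V) (ω : V → V → ℝ) (x : V) : ℝ := ∑ y ∈ nbr x, ω x y

/-- `ν^ω(x)`, the sum of the reciprocals of the weights of edges incident to `x`. -/
def nu (nbr : V → Finset V) (ω : V → V → ℝ) (x : V) : ℝ := ∑ y ∈ nbr x, (ω x y)⁻¹

/-- `(L_Y^ω f)(x)`. -/
def lap (nbr : V → Finset V) (ω : V → V → ℝ) (f : V → ℝ) (x : V) : ℝ :=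
  (mu nbr ω x)⁻¹ * ∑ y ∈ nbr x, ω x y * (f y - f x)

/-- space-averaged norm `‖f‖_{p,A}` for a real exponent `p`. -/
def nrm (A : Finset V) (p : ℝ) (f : V → ℝ) : ℝ :=
  ((A.card : ℝ)⁻¹ * ∑ x ∈ A, |f x| ^ p) ^ (1 / p)

/-- weighted space-averaged norm `‖f‖_{p,A,φ}` for a real exponent `p`. -/
def nrmW (A : Finset V) (p : ℝ) (φ : V → ℝ) (f : V → ℝ) : ℝ :=
  ((A.card : ℝ)⁻¹ * ∑ x ∈ A, |f x| ^ p * φ x) ^ (1 / p)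

/-- space-averaged norm `‖f‖_{p,A}` for an extended exponent `p ∈ (0,∞]`;
for `p = ∞` this is the maximum of `|f|` over `A`. -/
def nrmE (A : Finset V) (p : ℝ≥0∞) (f : V → ℝ) : ℝ :=
  if p = ⊤ then sSup ((fun x => |f x|) '' (A : Set V)) else nrm A p.toReal f

/-- weighted average `(u)_{A,π}`. -/
def wavg (A : Finset V) (π : V → ℝ) (u : V → ℝ) : ℝ :=
  (∑ x ∈ A, π x * u x) / ∑ x ∈ A, π x

open Classical in
/-- relative internal boundary `∂_B A`. -/
def relBdry (G : SimpleGraph V) (B A : Finset V) : Finset V :=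
  A.filter fun z => ∃ y ∈ B, y ∉ A ∧ G.Adj z y

open Classical in
/-- internal boundary `∂B`. -/
def intBdry (G : SimpleGraph V) (B : Finset V) : Finset V :=
  B.filter fun z => ∃ y, y ∉ B ∧ G.Adj z y

open Classical in
/-- Dirichlet sum `Σ_{x,y ∈ B, x∼y} ω(x,y) (u(x)-u(y))²`. -/
def dSum (G : SimpleGraph V) (ω : V → V → ℝ) (B : Finset V) (u : V → ℝ) : ℝ :=
  ∑ x ∈ B, ∑ y ∈ B, if G.Adj x y then ω x y * (u x - u y) ^ 2 else 0

/-- `E^ω_{η²}(u) = (1/2) Σ_{x,y} η(x)² ω(x,y) (u(y)-u(x))²`. -/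
def energySq (ω : V → V → ℝ) (η u : V → ℝ) : ℝ :=
  (1 / 2) * ∑' x, ∑' y, η x ^ 2 * ω x y * (u y - u x) ^ 2

/-- `E^{ω,η}(u) = (1/2) Σ_{x,y} min(η(x)²,η(y)²) ω(x,y) (u(y)-u(x))²`. -/
def energyMin (ω : V → V → ℝ) (η u : V → ℝ) : ℝ :=
  (1 / 2) * ∑' x, ∑' y, min (η x ^ 2) (η y ^ 2) * ω x y * (u y - u x) ^ 2

/-- `‖∇η‖_{ℓ∞(E)}`, the supremum of `|η(y)-η(x)|` over edges `{x,y}`. -/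
def gradSup (G : SimpleGraph V) (η : V → ℝ) : ℝ :=
  sSup {r : ℝ | ∃ x y, G.Adj x y ∧ r = |η y - η x|}

/-- `u` is caloric on `I × B`: `∂_t u = L_Y^ω u` on `I × B`. -/
def Caloric (nbr : V → Finset V) (ω : V → V → ℝ) (I : Set ℝ) (B : Set V)
    (u : ℝ → V → ℝ) : Prop :=
  ∀ x ∈ B, ∀ t ∈ I, HasDerivAt (fun s => u s x) (lap nbr ω (u t) x) t

/-- `u` is sub-caloric on `I × B`: `∂_t u ≤ L_Y^ω u` on `I × B`. -/
def SubCaloric (nbr : V → Finset V) (ω : V → V → ℝ) (I : Set ℝ) (B : Set V)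
    (u : ℝ → V → ℝ) : Prop :=
  ∀ x ∈ B, ∀ t ∈ I, ∃ d, HasDerivAt (fun s => u s x) d t ∧ d ≤ lap nbr ω (u t) x

/-- `u` is super-caloric on `I × B`: `∂_t u ≥ L_Y^ω u` on `I × B`. -/
def SuperCaloric (nbr : V → Finset V) (ω : V → V → ℝ) (I : Set ℝ) (B : Set V)
    (u : ℝ → V → ℝ) : Prop :=
  ∀ x ∈ B, ∀ t ∈ I, ∃ d, HasDerivAt (fun s => u s x) d t ∧ lap nbr ω (u t) x ≤ d

/-- space-time norm `‖u‖_{p,[a,b]×B,φ}`. -/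
def nrmST (a b : ℝ) (B : Finset V) (p : ℝ) (φ : V → ℝ) (u : ℝ → V → ℝ) : ℝ :=
  ((b - a)⁻¹ * ∫ t in a..b, nrmW B p φ (u t) ^ p) ^ (1 / p)

end RCM

/-!
Averaging the relative isoperimetric inequality over all balls of a suitable radius gives the
isoperimetric inequality, hence, by summing over level sets, an `ℓ¹` Sobolev inequality. The
Cauchy–Schwarz and Hölder inequalities turn it into a weighted Sobolev inequality, in which
`‖ν^ω‖_q` is the price for bounding a gradient by the Dirichlet energy. Testing superharmonicity
against `η² u^(β/ρ - 1)` bounds the energy of `η u^(β/(2ρ))` by a sum of `μ^ω u^(β/ρ)`, so that one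
step bounds `‖u‖_β` by `‖u‖_{β/χ}` on a larger ball, for a fixed `χ > 1`. The step is iterated until
the exponent falls below `α`. The powers `(ρ/β) χ^k` in the bounds grow geometrically: their sum is
comparable to `1/α - 1/β`, and the last one dominates the others, so that repeatedly halving the
distance between the radii costs only a constant factor in the base.
-/

namespace RCM

section Isoperimetry

variable {V : Type*} {G : SimpleGraph V} {ball : V → ℝ → Finset V} {d : ℕ} {C : ℝ}

/-- `ball x r` is the closed ball of radius `r` around `x` for the graph distance of `G`. -/
def IsBallFamily (G : SimpleGraph V) (ball : V → ℝ → Finset V) : Prop :=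
  ∀ x r y, y ∈ ball x r ↔ (G.dist x y : ℝ) ≤ r

/-- Volume regularity of order `d` with constant `C`. -/
def VolumeRegular (ball : V → ℝ → Finset V) (d : ℕ) (C : ℝ) : Prop :=
  ∀ x r, 1 ≤ r → C⁻¹ * r ^ d ≤ ((ball x r).card : ℝ) ∧ ((ball x r).card : ℝ) ≤ C * r ^ d

/-- The relative isoperimetric inequality with constant `C`, for nonempty sets that fill less than
half of a ball. -/
def RelIsoperimetric (G : SimpleGraph V) (ball : V → ℝ → Finset V) (C : ℝ) : Prop :=
  ∀ x r (A : Finset V), 1 ≤ r → A.Nonempty → A ⊆ ball x r →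
    (A.card : ℝ) < ((ball x r).card : ℝ) / 2 →
    C / r ≤ ((relBdry G (ball x r) A).card : ℝ) / (A.card : ℝ)

theorem IsBallFamily.mem_comm (hball : IsBallFamily G ball) {x y : V} {r : ℝ} :
    y ∈ ball x r ↔ x ∈ ball y r := by
  rw [hball, hball, SimpleGraph.dist_comm]

theorem IsBallFamily.ball_subset_ball (hball : IsBallFamily G ball) {x : V} {r R : ℝ}
    (hr : r ≤ R) : ball x r ⊆ ball x R :=
  fun y hy => (hball x R y).2 (((hball x r y).1 hy).trans hr)

theorem VolumeRegular.one_le (hreg : VolumeRegular ball d C) (hC : 0 < C) (x : V) : 1 ≤ C := by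
  have h := (hreg x 1 le_rfl).1.trans (hreg x 1 le_rfl).2
  rw [one_pow, mul_one, mul_one, inv_le_iff_one_le_mul₀ hC] at h
  nlinarith

theorem IsBallFamily.sum_card_inter_ball [DecidableEq V] (hball : IsBallFamily G ball) {r : ℝ}
    {S U : Finset V} (hU : ∀ z ∈ S, ball z r ⊆ U) :
    ∑ x ∈ U, (S ∩ ball x r).card = ∑ z ∈ S, (ball z r).card := by
  have h := sum_card_bipartiteAbove_eq_sum_card_bipartiteBelow (s := U) (t := S)
    fun x z => z ∈ ball x r
  simp only [bipartiteAbove, bipartiteBelow, filter_mem_eq_inter] at h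
  refine h.trans (sum_congr rfl fun z hz => congrArg card ?_)
  simp only [hball.mem_comm, filter_mem_eq_inter]
  exact inter_eq_right.2 (hU z hz)

theorem RelIsoperimetric.card_inter_ball_le [DecidableEq V] (hiso : RelIsoperimetric G ball C)
    {A : Finset V} {x : V} {r : ℝ} (hr : 1 ≤ r)
    (hA : (A.card : ℝ) < ((ball x r).card : ℝ) / 2) :
    C / r * ((A ∩ ball x r).card : ℝ) ≤ ((intBdry G A ∩ ball x r).card : ℝ) := by
  rcases (A ∩ ball x r).eq_empty_or_nonempty with hempty | hne
  · simp [hempty]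
  have hpos : (0 : ℝ) < (A ∩ ball x r).card := by exact_mod_cast hne.card_pos
  have hle : ((A ∩ ball x r).card : ℝ) ≤ A.card := by
    exact_mod_cast card_le_card inter_subset_left
  have hrel := hiso x r _ hr hne inter_subset_right (hle.trans_lt hA)
  rw [le_div_iff₀ hpos] at hrel
  have hsub : relBdry G (ball x r) (A ∩ ball x r) ⊆ intBdry G A ∩ ball x r := fun z hz => by
    simp only [relBdry, intBdry, mem_filter, mem_inter] at hz ⊢
    obtain ⟨⟨hzA, hzball⟩, y, hyball, hyA, hzy⟩ := hz
    exact ⟨⟨hzA, y, fun hy => hyA ⟨hy, hyball⟩, hzy⟩, hzball⟩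
  exact hrel.trans (by exact_mod_cast card_le_card hsub)

-- The relative isoperimetric inequality is summed over all balls of radius `r` meeting `A`: every
-- point of `A` or of its boundary lies in about `r ^ d` of them.
theorem card_le_card_intBdry_of_radius {Creg Criso : ℝ} (hball : IsBallFamily G ball)
    (hreg : VolumeRegular ball d Creg) (hCreg : 0 < Creg)
    (hiso : RelIsoperimetric G ball Criso) (hCriso : 0 < Criso) {A : Finset V} {r : ℝ}
    (hr : 1 ≤ r) (hA : 2 * Creg * (A.card : ℝ) < r ^ d) :
    Criso / (Creg ^ 2 * r) * (A.card : ℝ) ≤ ((intBdry G A).card : ℝ) := by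
  classical
  set U := A.biUnion fun z => ball z r
  have hU : ∀ z ∈ A, ball z r ⊆ U := fun z hz => subset_biUnion_of_mem (fun z => ball z r) hz
  have hUbdry : ∀ z ∈ intBdry G A, ball z r ⊆ U := fun z hz => hU z (mem_of_mem_filter z hz)
  have hhalf : ∀ x, (A.card : ℝ) < ((ball x r).card : ℝ) / 2 := fun x => by
    have h := (hreg x r hr).1
    rw [inv_mul_le_iff₀ hCreg] at h
    exact lt_of_mul_lt_mul_left (by linarith) hCreg.le
  have hsum := sum_le_sum fun x (_ : x ∈ U) => hiso.card_inter_ball_le hr (hhalf x)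
  rw [← mul_sum, ← Nat.cast_sum, ← Nat.cast_sum, hball.sum_card_inter_ball hU,
    hball.sum_card_inter_ball hUbdry, Nat.cast_sum, Nat.cast_sum] at hsum
  have hlower : (A.card : ℝ) * (Creg⁻¹ * r ^ d) ≤ ∑ z ∈ A, ((ball z r).card : ℝ) := by
    rw [← nsmul_eq_mul]
    exact card_nsmul_le_sum _ _ _ fun z _ => (hreg z r hr).1
  have hupper : ∑ z ∈ intBdry G A, ((ball z r).card : ℝ) ≤
      ((intBdry G A).card : ℝ) * (Creg * r ^ d) := by
    rw [← nsmul_eq_mul]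
    exact sum_le_card_nsmul _ _ _ fun z _ => (hreg z r hr).2
  refine le_of_mul_le_mul_right ?_ (show 0 < Creg * r ^ d by positivity)
  calc Criso / (Creg ^ 2 * r) * (A.card : ℝ) * (Creg * r ^ d)
      = Criso / r * ((A.card : ℝ) * (Creg⁻¹ * r ^ d)) := by field_simp
    _ ≤ Criso / r * ∑ z ∈ A, ((ball z r).card : ℝ) := by gcongr
    _ ≤ ((intBdry G A).card : ℝ) * (Creg * r ^ d) := hsum.trans hupper

/-- The constant in the isoperimetric inequality `|∂A| ≥ c |A| ^ (1 - 1 / d)`. -/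
def isoConst (d : ℕ) (Creg Criso : ℝ) : ℝ :=
  Criso / (Creg ^ 2 * (4 * Creg) ^ (1 / (d : ℝ)))

theorem isoConst_pos {Creg Criso : ℝ} (hCreg : 0 < Creg) (hCriso : 0 < Criso) :
    0 < isoConst d Creg Criso := by
  unfold isoConst; positivity

theorem isoConst_mul_card_rpow_le_card_intBdry {Creg Criso : ℝ} (hd : d ≠ 0)
    (hball : IsBallFamily G ball) (hreg : VolumeRegular ball d Creg) (hCreg : 0 < Creg)
    (hiso : RelIsoperimetric G ball Criso) (hCriso : 0 < Criso) {A : Finset V} (hA : A.Nonempty) :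
    isoConst d Creg Criso * (A.card : ℝ) ^ (1 - 1 / (d : ℝ)) ≤ ((intBdry G A).card : ℝ) := by
  have hcard : (1 : ℝ) ≤ A.card := by exact_mod_cast hA.card_pos
  have hCreg1 : 1 ≤ Creg := hreg.one_le hCreg hA.choose
  set r : ℝ := (4 * Creg * A.card) ^ (1 / (d : ℝ)) with hr
  have hr1 : 1 ≤ r := Real.one_le_rpow (by nlinarith) (by positivity)
  have hrd : r ^ d = 4 * Creg * A.card := by
    rw [hr, one_div, Real.rpow_inv_natCast_pow (by positivity) hd]
  refine le_of_eq_of_le ?_ (card_le_card_intBdry_of_radius hball hreg hCreg hiso hCriso hr1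
    (by rw [hrd]; nlinarith))
  rw [isoConst, hr, Real.rpow_sub (by positivity), Real.rpow_one,
    Real.mul_rpow (x := 4 * Creg) (by positivity) (by positivity)]
  field_simp

end Isoperimetry

section Sobolev

variable {V : Type*} {S T : Finset V}

/-- The total variation of `f` over ordered pairs of points of `T`, weighted by the kernel `k`. -/
def totalVariation (T : Finset V) (k : V → V → ℝ) (f : V → ℝ) : ℝ :=
  ∑ x ∈ T, ∑ y ∈ T, k x y * |f x - f y|

/-- The Dirichlet energy of `f` over ordered pairs of points of `T`, with conductances `ω`. -/
def dirichletEnergy (T : Finset V) (ω : V → V → ℝ) (f : V → ℝ) : ℝ :=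
  ∑ x ∈ T, ∑ y ∈ T, ω x y * (f x - f y) ^ 2

theorem dirichletEnergy_nonneg {ω : V → V → ℝ} (hω : ∀ x y, 0 ≤ ω x y) (f : V → ℝ) :
    0 ≤ dirichletEnergy T ω f :=
  sum_nonneg fun x _ => sum_nonneg fun y _ => mul_nonneg (hω x y) (sq_nonneg _)

theorem levelSet_induction {P : (V → ℝ) → Prop} (zero : P 0)
    (add : ∀ A ⊆ S, A.Nonempty → ∀ m : ℝ, 0 ≤ m → ∀ g : V → ℝ, (∀ x, 0 ≤ g x) →
      (∀ x ∉ A, g x = 0) → P g → P (g + m • (A : Set V).indicator 1))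
    {F : V → ℝ} (hF : ∀ x, 0 ≤ F x) (hsupp : ∀ x ∉ S, F x = 0) : P F := by
  classical
  induction S using Finset.strongInduction generalizing F with
  | H S ih =>
    rcases S.eq_empty_or_nonempty with rfl | hne
    · rwa [show F = 0 from funext fun x => hsupp x (notMem_empty x)]
    obtain ⟨z, hz, hmin⟩ := exists_min_image S F hne
    set g : V → ℝ := F - F z • (S : Set V).indicator 1 with hg
    have hg_mem : ∀ x ∈ S, g x = F x - F z := fun x hx => by simp [hg, hx]
    have hg_notMem : ∀ x ∉ S, g x = 0 := fun x hx => by simp [hg, hx, hsupp x hx]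
    have hg0 : ∀ x, 0 ≤ g x := fun x => by
      by_cases hx : x ∈ S
      · rw [hg_mem x hx]; exact sub_nonneg.2 (hmin x hx)
      · exact (hg_notMem x hx).ge
    have hg_supp : ∀ x ∉ S.erase z, g x = 0 := fun x hx => by
      by_cases hxS : x ∈ S
      · obtain rfl : x = z := by simpa [hxS] using hx
        rw [hg_mem x hxS, sub_self]
      · exact hg_notMem x hxS
    have hPg : P g := ih _ (erase_ssubset hz)
      (fun A hA => add A (hA.trans (erase_subset z S))) hg0 hg_supp
    simpa [hg] using add S subset_rfl hne (F z) (hF z) g hg0 hg_notMem hPg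

theorem abs_sub_add_smul_indicator {A : Finset V} {g : V → ℝ} {m : ℝ} (hg : ∀ x, 0 ≤ g x)
    (hgA : ∀ x ∉ A, g x = 0) (hm : 0 ≤ m) (x y : V) :
    |(g + m • (A : Set V).indicator 1 : V → ℝ) x - (g + m • (A : Set V).indicator 1 : V → ℝ) y| =
      |g x - g y| + m * |(A : Set V).indicator (1 : V → ℝ) x - (A : Set V).indicator 1 y| := by
  have hadd : ∀ z, |g z + m| = |g z| + m := fun z => by
    rw [abs_of_nonneg (hg z), abs_of_nonneg (add_nonneg (hg z) hm)]
  by_cases hx : x ∈ A <;> by_cases hy : y ∈ A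
  · simp [hx, hy]
  · simp [hx, hy, hgA, hadd]
  · rw [abs_sub_comm]
    simp [hx, hy, hgA, hadd]
  · simp [hx, hy, hgA]

theorem totalVariation_add_smul_indicator (k : V → V → ℝ) {A : Finset V} {g : V → ℝ} {m : ℝ}
    (hg : ∀ x, 0 ≤ g x) (hgA : ∀ x ∉ A, g x = 0) (hm : 0 ≤ m) :
    totalVariation T k (g + m • (A : Set V).indicator 1) =
      totalVariation T k g + m * totalVariation T k ((A : Set V).indicator 1) := by
  simp only [totalVariation, abs_sub_add_smul_indicator hg hgA hm, mul_sum, ← sum_add_distrib]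
  exact sum_congr rfl fun x _ => sum_congr rfl fun y _ => by ring

theorem sum_smul_indicator_rpow {A : Finset V} (hAS : A ⊆ S) {m r : ℝ} (hm : 0 ≤ m)
    (hr : r ≠ 0) :
    (∑ x ∈ S, (m • (A : Set V).indicator (1 : V → ℝ)) x ^ r) ^ (1 / r) =
      m * (A.card : ℝ) ^ (1 / r) := by
  rw [← sum_subset hAS fun x _ hx => by simp [hx, Real.zero_rpow hr],
    sum_congr rfl (g := fun _ => m ^ r) fun x hx => by simp [hx], sum_const, nsmul_eq_mul,
    Real.mul_rpow (by positivity) (by positivity), ← Real.rpow_mul hm, mul_one_div_cancel hr,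
    Real.rpow_one, mul_comm]

theorem sobolev_of_isoperimetric (k : V → V → ℝ) {c r : ℝ} (hr : 1 ≤ r) (hc : 0 ≤ c)
    (hiso : ∀ A ⊆ S, A.Nonempty →
      c * (A.card : ℝ) ^ (1 / r) ≤ totalVariation T k ((A : Set V).indicator 1))
    {F : V → ℝ} (hF : ∀ x, 0 ≤ F x) (hsupp : ∀ x ∉ S, F x = 0) :
    c * (∑ x ∈ S, F x ^ r) ^ (1 / r) ≤ totalVariation T k F := by
  have hr0 : r ≠ 0 := by linarith
  refine levelSet_induction (S := S) (P := fun F =>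
    c * (∑ x ∈ S, F x ^ r) ^ (1 / r) ≤ totalVariation T k F) ?_ ?_ hF hsupp
  · simp [totalVariation, Real.zero_rpow hr0, Real.zero_rpow (inv_ne_zero hr0)]
  intro A hAS hA m hm g hg hgA hPg
  have hind : ∀ x, 0 ≤ (m • (A : Set V).indicator (1 : V → ℝ)) x := fun x =>
    mul_nonneg hm (Set.indicator_nonneg (fun _ _ => zero_le_one (α := ℝ)) x)
  have hminkowski : (∑ x ∈ S, (g + m • (A : Set V).indicator 1 : V → ℝ) x ^ r) ^ (1 / r) ≤
      (∑ x ∈ S, g x ^ r) ^ (1 / r) + m * (A.card : ℝ) ^ (1 / r) := by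
    rw [← sum_smul_indicator_rpow hAS hm hr0]
    exact Real.Lp_add_le_of_nonneg S hr (fun x _ => hg x) fun x _ => hind x
  rw [totalVariation_add_smul_indicator k hg hgA hm]
  calc c * (∑ x ∈ S, (g + m • (A : Set V).indicator 1 : V → ℝ) x ^ r) ^ (1 / r)
      ≤ c * ((∑ x ∈ S, g x ^ r) ^ (1 / r) + m * (A.card : ℝ) ^ (1 / r)) := by
        gcongr
    _ = c * (∑ x ∈ S, g x ^ r) ^ (1 / r) + m * (c * (A.card : ℝ) ^ (1 / r)) := by ring
    _ ≤ totalVariation T k g + m * totalVariation T k ((A : Set V).indicator 1) := by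
        gcongr
        exact hiso A hAS hA

end Sobolev

section WeightedSobolev

variable {V : Type*} {S T : Finset V} {ω w k : V → V → ℝ} {f g : V → ℝ}

-- Bernoulli's inequality for `(b / a) ^ s`.
theorem rpow_sub_rpow_le_of_le {a b s : ℝ} (hb : 0 ≤ b) (hab : b ≤ a) (hs : 1 ≤ s) :
    a ^ s - b ^ s ≤ s * ((a - b) * a ^ (s - 1)) := by
  rcases (hb.trans hab).eq_or_lt with rfl | ha
  · simp [hab.antisymm hb]
  have hbernoulli : 1 + s * (b / a - 1) ≤ (b / a) ^ s := by
    have hba : (-1 : ℝ) ≤ b / a - 1 := by linarith [div_nonneg hb ha.le]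
    simpa using one_add_mul_self_le_rpow_one_add hba hs
  rw [Real.div_rpow hb ha.le, le_div_iff₀ (by positivity)] at hbernoulli
  have hpow : a ^ s = a * a ^ (s - 1) := by
    rw [Real.rpow_sub_one ha.ne', mul_div_cancel₀ _ ha.ne']
  have hexpand : (1 + s * (b / a - 1)) * a ^ s = a ^ s - s * ((a - b) * a ^ (s - 1)) := by
    rw [hpow]; field_simp; ring
  linarith

theorem abs_rpow_sub_rpow_le {a b s : ℝ} (ha : 0 ≤ a) (hb : 0 ≤ b) (hs : 1 ≤ s) :
    |a ^ s - b ^ s| ≤ s * (|a - b| * (a ^ (s - 1) + b ^ (s - 1))) := by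
  wlog hab : b ≤ a generalizing a b
  · simpa only [abs_sub_comm, add_comm] using this hb ha (le_of_not_ge hab)
  rw [abs_of_nonneg (sub_nonneg.2 (Real.rpow_le_rpow hb hab (by linarith))),
    abs_of_nonneg (sub_nonneg.2 hab)]
  refine (rpow_sub_rpow_le_of_le hb hab hs).trans ?_
  have hb' : 0 ≤ b ^ (s - 1) := Real.rpow_nonneg hb _
  gcongr
  linarith

theorem totalVariation_rpow_le (hk : ∀ x y, 0 ≤ k x y) (hksymm : ∀ x y, k x y = k y x)
    (hf : ∀ x, 0 ≤ f x) {s : ℝ} (hs : 1 ≤ s) :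
    totalVariation T k (fun x => f x ^ s) ≤
      2 * s * ∑ x ∈ T, ∑ y ∈ T, k x y * (|f x - f y| * f x ^ (s - 1)) := by
  have hswap : ∑ x ∈ T, ∑ y ∈ T, k x y * (|f x - f y| * f y ^ (s - 1)) =
      ∑ x ∈ T, ∑ y ∈ T, k x y * (|f x - f y| * f x ^ (s - 1)) := by
    rw [sum_comm]
    simp only [hksymm, abs_sub_comm]
  calc totalVariation T k (fun x => f x ^ s)
      ≤ ∑ x ∈ T, ∑ y ∈ T, k x y * (s * (|f x - f y| * (f x ^ (s - 1) + f y ^ (s - 1)))) :=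
        sum_le_sum fun x _ => sum_le_sum fun y _ =>
          mul_le_mul_of_nonneg_left (abs_rpow_sub_rpow_le (hf x) (hf y) hs) (hk x y)
    _ = s * (∑ x ∈ T, ∑ y ∈ T, k x y * (|f x - f y| * f x ^ (s - 1)) +
          ∑ x ∈ T, ∑ y ∈ T, k x y * (|f x - f y| * f y ^ (s - 1))) := by
        simp only [← sum_add_distrib, mul_sum]
        exact sum_congr rfl fun x _ => sum_congr rfl fun y _ => by ring
    _ = 2 * s * ∑ x ∈ T, ∑ y ∈ T, k x y * (|f x - f y| * f x ^ (s - 1)) := by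
        rw [hswap]; ring

theorem sum_mul_abs_sub_mul_sq_le (hω : ∀ x y, 0 ≤ ω x y) (hw : ∀ x y, 0 ≤ w x y)
    (hkw : ∀ x y, k x y ^ 2 ≤ ω x y * w x y) :
    (∑ x ∈ T, ∑ y ∈ T, k x y * (|f x - f y| * g x)) ^ 2 ≤
      dirichletEnergy T ω f * ∑ x ∈ T, (∑ y ∈ T, w x y) * g x ^ 2 := by
  rw [sum_congr rfl fun x _ => sum_mul T (w x) (g x ^ 2), dirichletEnergy, ← sum_product',
    ← sum_product', ← sum_product']
  refine sum_sq_le_sum_mul_sum_of_sq_le_mul _ (fun i _ => mul_nonneg (hω _ _) (sq_nonneg _))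
    (fun i _ => mul_nonneg (hw _ _) (sq_nonneg _)) fun i _ => ?_
  calc (k i.1 i.2 * (|f i.1 - f i.2| * g i.1)) ^ 2
      = k i.1 i.2 ^ 2 * ((f i.1 - f i.2) ^ 2 * g i.1 ^ 2) := by rw [mul_pow, mul_pow, sq_abs]
    _ ≤ ω i.1 i.2 * w i.1 i.2 * ((f i.1 - f i.2) ^ 2 * g i.1 ^ 2) := by
        gcongr
        exact hkw _ _
    _ = ω i.1 i.2 * (f i.1 - f i.2) ^ 2 * (w i.1 i.2 * g i.1 ^ 2) := by ring

theorem totalVariation_rpow_sq_le (hST : S ⊆ T) (hω : ∀ x y, 0 ≤ ω x y)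
    (hw : ∀ x y, 0 ≤ w x y) (hk : ∀ x y, 0 ≤ k x y) (hksymm : ∀ x y, k x y = k y x)
    (hkw : ∀ x y, k x y ^ 2 ≤ ω x y * w x y) (hf : ∀ x, 0 ≤ f x) (hsupp : ∀ x ∉ S, f x = 0)
    {q q' ρ : ℝ} (hq : q.HolderConjugate q') (hρ : 0 < ρ) :
    totalVariation T k (fun x => f x ^ (1 + ρ / q')) ^ 2 ≤
      4 * (1 + ρ / q') ^ 2 * dirichletEnergy T ω f *
        ((∑ x ∈ S, (∑ y ∈ T, w x y) ^ q) ^ (1 / q) * (∑ x ∈ S, f x ^ (2 * ρ)) ^ (1 / q')) := by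
  have hq' : 0 < q' := hq.symm.pos
  have hρq' : 0 < ρ / q' := div_pos hρ hq'
  have hN : ∀ x, 0 ≤ ∑ y ∈ T, w x y := fun x => sum_nonneg fun y _ => hw x y
  have hTV : 0 ≤ totalVariation T k (fun x => f x ^ (1 + ρ / q')) :=
    sum_nonneg fun x _ => sum_nonneg fun y _ => mul_nonneg (hk x y) (abs_nonneg _)
  have hle := totalVariation_rpow_le (T := T) hk hksymm hf (le_add_of_nonneg_right hρq'.le)
  rw [add_sub_cancel_left] at hle
  have hholder : ∑ x ∈ T, (∑ y ∈ T, w x y) * (f x ^ (ρ / q')) ^ 2 ≤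
      (∑ x ∈ S, (∑ y ∈ T, w x y) ^ q) ^ (1 / q) * (∑ x ∈ S, f x ^ (2 * ρ)) ^ (1 / q') := by
    rw [← sum_subset hST fun x _ hx => by simp [hsupp x hx, Real.zero_rpow hρq'.ne']]
    refine (Real.inner_le_Lp_mul_Lq_of_nonneg S hq (fun x _ => hN x)
      fun x _ => sq_nonneg (f x ^ (ρ / q'))).trans_eq ?_
    congr 2
    refine sum_congr rfl fun x _ => ?_
    rw [← Real.rpow_two, ← Real.rpow_mul (hf x), ← Real.rpow_mul (hf x)]
    congr 1
    field_simp
  calc totalVariation T k (fun x => f x ^ (1 + ρ / q')) ^ 2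
      ≤ (2 * (1 + ρ / q') * ∑ x ∈ T, ∑ y ∈ T, k x y * (|f x - f y| * f x ^ (ρ / q'))) ^ 2 :=
        pow_le_pow_left₀ hTV hle 2
    _ = 4 * (1 + ρ / q') ^ 2 *
          (∑ x ∈ T, ∑ y ∈ T, k x y * (|f x - f y| * f x ^ (ρ / q'))) ^ 2 := by ring
    _ ≤ 4 * (1 + ρ / q') ^ 2 *
          (dirichletEnergy T ω f * ∑ x ∈ T, (∑ y ∈ T, w x y) * (f x ^ (ρ / q')) ^ 2) := by
        gcongr
        exact sum_mul_abs_sub_mul_sq_le hω hw hkw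
    _ ≤ _ := by
        rw [← mul_assoc]
        have := dirichletEnergy_nonneg (T := T) hω f
        gcongr

theorem weighted_sobolev (hST : S ⊆ T) (hω : ∀ x y, 0 ≤ ω x y) (hw : ∀ x y, 0 ≤ w x y)
    (hk : ∀ x y, 0 ≤ k x y) (hksymm : ∀ x y, k x y = k y x)
    (hkw : ∀ x y, k x y ^ 2 ≤ ω x y * w x y) {c r q q' ρ : ℝ} (hc : 0 ≤ c) (hr : 1 ≤ r)
    (hq : q.HolderConjugate q') (hρ : 0 < ρ) (hexp : 2 / r = 1 / ρ + 1 / q')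
    (hiso : ∀ A ⊆ S, A.Nonempty →
      c * (A.card : ℝ) ^ (1 / r) ≤ totalVariation T k ((A : Set V).indicator 1))
    (hf : ∀ x, 0 ≤ f x) (hsupp : ∀ x ∉ S, f x = 0) :
    c ^ 2 * (∑ x ∈ S, f x ^ (2 * ρ)) ^ (1 / ρ) ≤
      4 * (1 + ρ / q') ^ 2 * (∑ x ∈ S, (∑ y ∈ T, w x y) ^ q) ^ (1 / q) *
        dirichletEnergy T ω f := by
  have hq' : 0 < q' := hq.symm.pos
  have hs : (1 + ρ / q') * r = 2 * ρ := by
    field_simp at hexp ⊢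
    linarith
  have hE := dirichletEnergy_nonneg (T := T) hω f
  have hN : 0 ≤ (∑ x ∈ S, (∑ y ∈ T, w x y) ^ q) ^ (1 / q) := Real.rpow_nonneg
    (sum_nonneg fun x _ => Real.rpow_nonneg (sum_nonneg fun y _ => hw x y) _) _
  have hsob := sobolev_of_isoperimetric k hr hc hiso (F := fun x => f x ^ (1 + ρ / q'))
    (fun x => Real.rpow_nonneg (hf x) _)
    fun x hx => by rw [hsupp x hx, Real.zero_rpow (by positivity)]
  simp only [← Real.rpow_mul (hf _), hs] at hsob
  set X := ∑ x ∈ S, f x ^ (2 * ρ)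
  rcases (show 0 ≤ X from sum_nonneg fun x _ => Real.rpow_nonneg (hf x) _).eq_or_lt with hX | hX
  · rw [← hX, Real.zero_rpow (by positivity), mul_zero]
    positivity
  have hXpow : (X ^ (1 / r)) ^ 2 = X ^ (1 / ρ) * X ^ (1 / q') := by
    rw [← Real.rpow_add hX, ← hexp, ← Real.rpow_two, ← Real.rpow_mul hX.le, one_div_mul_eq_div]
  refine le_of_mul_le_mul_right ?_ (show 0 < X ^ (1 / q') by positivity)
  calc c ^ 2 * X ^ (1 / ρ) * X ^ (1 / q') = (c * X ^ (1 / r)) ^ 2 := by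
        rw [mul_pow, hXpow, mul_assoc]
    _ ≤ totalVariation T k (fun x => f x ^ (1 + ρ / q')) ^ 2 :=
        pow_le_pow_left₀ (by positivity) hsob 2
    _ ≤ _ := totalVariation_rpow_sq_le hST hω hw hk hksymm hkw hf hsupp hq hρ
    _ = _ := by ring

end WeightedSobolev

section Caccioppoli

theorem neg_le_mul_of_sq_le {M P B : ℝ} (hP : 0 ≤ P) (hB : 0 ≤ B) (hM : M ^ 2 ≤ 2 * P * B)
    (x y : ℝ) : -(x ^ 2 * P / 2 + 4 * (y ^ 2 * B)) ≤ 2 * (x * y) * M := by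
  refine neg_le_of_abs_le (abs_le_of_sq_le_sq ?_ (by positivity))
  calc (2 * (x * y) * M) ^ 2 = 4 * (x * y) ^ 2 * M ^ 2 := by ring
    _ ≤ 4 * (x * y) ^ 2 * (2 * P * B) := by gcongr
    _ ≤ (x ^ 2 * P / 2 + 4 * (y ^ 2 * B)) ^ 2 := by
        linarith [sq_nonneg (x ^ 2 * P / 2 - 4 * (y ^ 2 * B))]

-- This is `caccioppoli_pointwise` below for `U = 1`, `W = R` and `A = R ^ a`. The factor `P` is the
-- gain at a constant cutoff, and the cross term is absorbed by Young's inequality.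
theorem caccioppoli_normalized {R A η ζ : ℝ} (hA : 1 ≤ A) (hAR : A ^ 4 ≤ R) :
    (η - ζ * A) ^ 2 / 4 ≤
      (R - 1) * (η ^ 2 - ζ ^ 2 * (A ^ 2 / R)) + 6 * ((η - ζ) ^ 2 * A ^ 2) := by
  have hR : 1 ≤ R := (one_le_pow₀ hA).trans hAR
  set K := A ^ 2 / R with hK
  have hKR : K * R = A ^ 2 := div_mul_cancel₀ _ (by linarith)
  have hK0 : 0 ≤ K := by positivity
  have hKA : K * A ^ 2 ≤ 1 := by
    rw [hK, div_mul_eq_mul_div, div_le_one (by linarith)]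
    linarith
  have hKA1 : 0 ≤ K * (A ^ 2 - 1) := mul_nonneg hK0 (sub_nonneg.2 (one_le_pow₀ hA))
  clear_value K
  set P := (R - 1) * (1 - K) with hP
  have hAP : (A - 1) ^ 2 ≤ P := by
    nlinarith [mul_nonneg hK0 (sub_nonneg.2 hA), mul_nonneg hK0 (sq_nonneg (A - 1))]
  have hRK : (R - 1) * K ≤ 2 * (R * (1 - K)) := by nlinarith
  have hRKsq : ((R - 1) * K) ^ 2 ≤ 2 * P * A ^ 2 := by
    nlinarith [mul_le_mul_of_nonneg_left hRK (mul_nonneg (sub_nonneg.2 hR) hK0)]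
  have hyoung := neg_le_mul_of_sq_le ((sq_nonneg _).trans hAP) (sq_nonneg A) hRKsq η (η - ζ)
  have hRKA : (η - ζ) ^ 2 * ((R - 1) * K) ≤ (η - ζ) ^ 2 * A ^ 2 := by
    gcongr; linarith
  have hδ : 0 ≤ (η - ζ) ^ 2 * A ^ 2 := by positivity
  calc (η - ζ * A) ^ 2 / 4
      ≤ η ^ 2 * (A - 1) ^ 2 / 2 + (η - ζ) ^ 2 * A ^ 2 := by
        nlinarith [sq_nonneg (η * (A - 1) + (η - ζ) * A)]
    _ ≤ η ^ 2 * P / 2 + (η - ζ) ^ 2 * A ^ 2 := by gcongr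
    _ ≤ η ^ 2 * P + 2 * (η * (η - ζ)) * ((R - 1) * K) - (η - ζ) ^ 2 * ((R - 1) * K) +
          6 * ((η - ζ) ^ 2 * A ^ 2) := by linarith
    _ = (R - 1) * (η ^ 2 - ζ ^ 2 * K) + 6 * ((η - ζ) ^ 2 * A ^ 2) := by rw [hP]; ring

theorem caccioppoli_pointwise {U W a η ζ I J : ℝ} (hU : 0 < U) (hW : 0 < W) (ha : 0 ≤ a)
    (ha4 : a ≤ 1 / 4) (hI : 0 ≤ I) (hJ : 0 ≤ J) (hηI : η ≠ 0 → (U ^ a) ^ 2 ≤ I)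
    (hζJ : ζ ≠ 0 → (W ^ a) ^ 2 ≤ J) :
    (η * U ^ a - ζ * W ^ a) ^ 2 / 4 ≤
      (W - U) * (η ^ 2 * ((U ^ a) ^ 2 / U) - ζ ^ 2 * ((W ^ a) ^ 2 / W)) +
        6 * ((η - ζ) ^ 2 * (I + J)) := by
  wlog hUW : U ≤ W generalizing U W η ζ I J
  · have := this hW hU hJ hI hζJ hηI (le_of_not_ge hUW)
    linarith
  rcases eq_or_ne ζ 0 with rfl | hζ
  · have hη : η ^ 2 * (U ^ a) ^ 2 ≤ η ^ 2 * (I + J) := by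
      rcases eq_or_ne η 0 with rfl | hη
      · simp
      · gcongr
        linarith [hηI hη]
    have hpos : 0 ≤ (W - U) * (η ^ 2 * ((U ^ a) ^ 2 / U)) :=
      mul_nonneg (sub_nonneg.2 hUW) (by positivity)
    nlinarith [sq_nonneg (η * U ^ a)]
  have hR : 1 ≤ W / U := (one_le_div hU).2 hUW
  have hA4 : ((W / U) ^ a) ^ 4 ≤ W / U := by
    rw [← Real.rpow_mul_natCast (by linarith)]
    exact Real.rpow_le_self_of_one_le hR (by norm_num; linarith)
  have hmul := mul_le_mul_of_nonneg_left (caccioppoli_normalized (η := η) (ζ := ζ)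
    (Real.one_le_rpow hR ha) hA4) (sq_nonneg (U ^ a))
  have hUa : 0 < U ^ a := by positivity
  rw [Real.div_rpow hW.le hU.le] at hmul
  calc (η * U ^ a - ζ * W ^ a) ^ 2 / 4
      = (U ^ a) ^ 2 * ((η - ζ * (W ^ a / U ^ a)) ^ 2 / 4) := by field_simp
    _ ≤ _ := hmul
    _ = (W - U) * (η ^ 2 * ((U ^ a) ^ 2 / U) - ζ ^ 2 * ((W ^ a) ^ 2 / W)) +
          6 * ((η - ζ) ^ 2 * (W ^ a) ^ 2) := by field_simp
    _ ≤ _ := by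
        gcongr
        linarith [hζJ hζ]

variable {V : Type*} {S T : Finset V} {ω : V → V → ℝ} {u η : V → ℝ}

-- The supersolution is tested against `η ^ 2 * u ^ (2 * a - 1)`.
theorem caccioppoli (hST : S ⊆ T) (hω : ∀ x y, 0 ≤ ω x y) (hsymm : ∀ x y, ω x y = ω y x)
    {a δ : ℝ} (ha : 0 ≤ a) (ha4 : a ≤ 1 / 4) (hu : ∀ x, 0 < u x) (hη : ∀ x ∉ S, η x = 0)
    (hsuper : ∀ x ∈ S, ∑ y ∈ T, ω x y * (u y - u x) ≤ 0)
    (hgrad : ∀ x y, ω x y * (η x - η y) ^ 2 ≤ ω x y * δ) :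
    dirichletEnergy T ω (fun x => η x * u x ^ a) ≤
      48 * δ * ∑ x ∈ S, (∑ y ∈ T, ω x y) * (u x ^ a) ^ 2 := by
  classical
  set I : V → ℝ := fun x => if x ∈ S then (u x ^ a) ^ 2 else 0 with hI
  have hI0 : ∀ x, 0 ≤ I x := fun x => by
    simp only [hI]; split_ifs <;> positivity
  have hηI : ∀ x, η x ≠ 0 → (u x ^ a) ^ 2 ≤ I x := fun x hx => by
    simp only [hI, if_pos (by_contra fun hxS => hx (hη x hxS) : x ∈ S), le_refl]
  set H : V → ℝ := fun x => η x ^ 2 * ((u x ^ a) ^ 2 / u x) with hH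
  have hpointwise : ∀ x y, ω x y * (η x * u x ^ a - η y * u y ^ a) ^ 2 ≤
      4 * (ω x y * (u y - u x) * H x) + 4 * (ω y x * (u x - u y) * H y) +
        24 * δ * (ω x y * I x) + 24 * δ * (ω y x * I y) := fun x y => by
    have h1 := mul_le_mul_of_nonneg_left (caccioppoli_pointwise (hu x) (hu y) ha ha4 (hI0 x)
      (hI0 y) (hηI x) (hηI y)) (hω x y)
    have h2 := mul_le_mul_of_nonneg_right (hgrad x y) (add_nonneg (hI0 x) (hI0 y))
    simp only [hsymm y x]
    linarith
  have htest : ∑ x ∈ T, ∑ y ∈ T, ω x y * (u y - u x) * H x ≤ 0 := by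
    refine sum_nonpos fun x _ => ?_
    rw [← sum_mul]
    by_cases hxS : x ∈ S
    · exact mul_nonpos_of_nonpos_of_nonneg (hsuper x hxS)
        (mul_nonneg (sq_nonneg _) (div_nonneg (sq_nonneg _) (hu x).le))
    · simp [hH, hη x hxS]
  have hmass : ∑ x ∈ T, ∑ y ∈ T, ω x y * I x = ∑ x ∈ S, (∑ y ∈ T, ω x y) * (u x ^ a) ^ 2 := by
    rw [← sum_subset hST fun x _ hx => by simp [hI, hx]]
    exact sum_congr rfl fun x hx => by simp [hI, hx, sum_mul]
  have hsum : dirichletEnergy T ω (fun x => η x * u x ^ a) ≤ _ :=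
    sum_le_sum fun x _ => sum_le_sum fun y _ => hpointwise x y
  simp only [sum_add_distrib, ← mul_sum] at hsum
  rw [sum_comm (f := fun x y => ω y x * (u x - u y) * H y),
    sum_comm (f := fun x y => ω y x * I y), hmass] at hsum
  linarith

end Caccioppoli

section Cutoff

/-- The cutoff function which is `1` up to `s`, `0` beyond `t`, and affine in between. -/
def cutoff (s t r : ℝ) : ℝ :=
  Set.projIcc (0 : ℝ) 1 zero_le_one ((t - r) / (t - s))

variable {s t r : ℝ}

theorem cutoff_nonneg : 0 ≤ cutoff s t r :=
  (Set.projIcc (0 : ℝ) 1 zero_le_one _).2.1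

theorem cutoff_eq_one (hst : s < t) (hr : r ≤ s) : cutoff s t r = 1 :=
  congrArg Subtype.val <| Set.projIcc_of_right_le zero_le_one <|
    (one_le_div (sub_pos.2 hst)).2 (by linarith)

theorem cutoff_eq_zero (hst : s ≤ t) (hr : t ≤ r) : cutoff s t r = 0 :=
  congrArg Subtype.val <| Set.projIcc_of_le_left zero_le_one <|
    div_nonpos_of_nonpos_of_nonneg (sub_nonpos.2 hr) (sub_nonneg.2 hst)

theorem abs_cutoff_sub_cutoff_le (hst : s ≤ t) (r r' : ℝ) :
    |cutoff s t r - cutoff s t r'| ≤ |r - r'| / (t - s) := by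
  refine (Set.abs_projIcc_sub_projIcc zero_le_one).trans_eq ?_
  rw [← sub_div, sub_sub_sub_cancel_left, abs_div, abs_of_nonneg (sub_nonneg.2 hst), abs_sub_comm]

theorem abs_dist_sub_dist_le_one {V : Type*} {G : SimpleGraph V} {x y : V} (hxy : G.Adj x y)
    (z : V) : |(G.dist z x : ℝ) - G.dist z y| ≤ 1 := by
  have hle : G.dist z x ≤ G.dist z y + 1 ∧ G.dist z y ≤ G.dist z x + 1 := by
    rcases hxy.diff_dist_adj (u := z) with h | h | h <;> lia
  have hx : (G.dist z x : ℝ) ≤ G.dist z y + 1 := by exact_mod_cast hle.1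
  have hy : (G.dist z y : ℝ) ≤ G.dist z x + 1 := by exact_mod_cast hle.2
  exact abs_le.2 ⟨by linarith, by linarith⟩

theorem sq_cutoff_dist_sub_le {V : Type*} {G : SimpleGraph V} {x y : V} (hxy : G.Adj x y)
    (z : V) (hst : s ≤ t) :
    (cutoff s t (G.dist z x) - cutoff s t (G.dist z y)) ^ 2 ≤ ((t - s) ^ 2)⁻¹ := by
  have h : |cutoff s t (G.dist z x) - cutoff s t (G.dist z y)| ≤ (t - s)⁻¹ :=
    (abs_cutoff_sub_cutoff_le hst _ _).trans <| by
      rw [← one_div]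
      exact div_le_div_of_nonneg_right (abs_dist_sub_dist_le_one hxy z) (sub_nonneg.2 hst)
  rw [← sq_abs, ← inv_pow]
  exact pow_le_pow_left₀ (abs_nonneg _) h 2

end Cutoff

section Network

variable {V : Type*} {G : SimpleGraph V} {nbr : V → Finset V} {ω : V → V → ℝ}

/-- `ω` is a symmetric family of weights carried exactly by the edges of `G`, and `nbr` lists the
neighbours of each vertex. -/
structure IsNetwork (G : SimpleGraph V) (nbr : V → Finset V) (ω : V → V → ℝ) : Prop where
  mem_nbr : ∀ x y, y ∈ nbr x ↔ G.Adj x y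
  symm : ∀ x y, ω x y = ω y x
  pos : ∀ x y, G.Adj x y → 0 < ω x y
  eq_zero : ∀ x y, ¬ G.Adj x y → ω x y = 0

namespace IsNetwork

theorem nonneg (hnet : IsNetwork G nbr ω) (x y : V) : 0 ≤ ω x y := by
  by_cases hxy : G.Adj x y
  exacts [(hnet.pos x y hxy).le, (hnet.eq_zero x y hxy).ge]

theorem eq_zero_of_notMem (hnet : IsNetwork G nbr ω) {x y : V} (hy : y ∉ nbr x) : ω x y = 0 :=
  hnet.eq_zero x y (mt (hnet.mem_nbr x y).2 hy)

theorem mu_nonneg (hnet : IsNetwork G nbr ω) (x : V) : 0 ≤ mu nbr ω x :=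
  sum_nonneg fun y _ => hnet.nonneg x y

theorem nu_nonneg (hnet : IsNetwork G nbr ω) (x : V) : 0 ≤ nu nbr ω x :=
  sum_nonneg fun y _ => inv_nonneg.2 (hnet.nonneg x y)

variable {S T : Finset V}

theorem sum_eq_mu (hnet : IsNetwork G nbr ω) {x : V} (hx : nbr x ⊆ T) :
    ∑ y ∈ T, ω x y = mu nbr ω x :=
  (sum_subset hx fun _ _ hy => hnet.eq_zero_of_notMem hy).symm

theorem sum_inv_eq_nu (hnet : IsNetwork G nbr ω) {x : V} (hx : nbr x ⊆ T) :
    ∑ y ∈ T, (ω x y)⁻¹ = nu nbr ω x :=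
  (sum_subset hx fun _ _ hy => by rw [hnet.eq_zero_of_notMem hy, inv_zero]).symm

theorem sum_mul_sub_nonpos (hnet : IsNetwork G nbr ω) {u : V → ℝ} {x : V} (hx : nbr x ⊆ T)
    (hlap : lap nbr ω u x ≤ 0) : ∑ y ∈ T, ω x y * (u y - u x) ≤ 0 := by
  rw [← sum_subset hx fun y _ hy => by rw [hnet.eq_zero_of_notMem hy, zero_mul]]
  rcases (hnet.mu_nonneg x).eq_or_lt with hmu | hmu
  · have hω : ∀ y ∈ nbr x, ω x y = 0 :=
      (sum_eq_zero_iff_of_nonneg fun y _ => hnet.nonneg x y).1 hmu.symm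
    exact (sum_eq_zero fun y hy => by rw [hω y hy, zero_mul]).le
  · exact nonpos_of_mul_nonpos_right hlap (inv_pos.2 hmu)

theorem card_intBdry_le_totalVariation (hnet : IsNetwork G nbr ω) {A : Finset V} (hAT : A ⊆ T)
    (hnbr : ∀ x ∈ A, nbr x ⊆ T) :
    ((intBdry G A).card : ℝ) ≤
      totalVariation T (fun x y => ω x y * (ω x y)⁻¹) ((A : Set V).indicator 1) := by
  classical
  have hterm : ∀ x y, 0 ≤ ω x y * (ω x y)⁻¹ *
      |(A : Set V).indicator (1 : V → ℝ) x - (A : Set V).indicator (1 : V → ℝ) y| := fun x y =>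
    mul_nonneg (mul_nonneg (hnet.nonneg x y) (inv_nonneg.2 (hnet.nonneg x y))) (abs_nonneg _)
  rw [← nsmul_one, ← sum_const]
  refine (sum_le_sum fun z hz => ?_).trans <| sum_le_sum_of_subset_of_nonneg
    ((filter_subset _ _).trans hAT) fun x _ _ => sum_nonneg fun y _ => hterm x y
  obtain ⟨hzA, y, hyA, hzy⟩ := mem_filter.1 hz
  refine le_trans (le_of_eq ?_) <|
    single_le_sum (fun y _ => hterm z y) (hnbr z hzA ((hnet.mem_nbr z y).2 hzy))
  rw [mul_inv_cancel₀ (hnet.pos z y hzy).ne']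
  simp [hzA, hyA]

theorem sobolev (hnet : IsNetwork G nbr ω) (hST : S ⊆ T) (hnbr : ∀ x ∈ S, nbr x ⊆ T)
    {d c q q' ρ : ℝ} (hd : 1 < d) (hc : 0 ≤ c)
    (hiso : ∀ A : Finset V, A.Nonempty → c * (A.card : ℝ) ^ (1 - 1 / d) ≤ (intBdry G A).card)
    (hq : q.HolderConjugate q') (hρ : 0 < ρ) (hexp : 1 / ρ = 1 - 2 / d + 1 / q) {f : V → ℝ}
    (hf : ∀ x, 0 ≤ f x) (hsupp : ∀ x ∉ S, f x = 0) :
    c ^ 2 * (∑ x ∈ S, f x ^ (2 * ρ)) ^ (1 / ρ) ≤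
      4 * (1 + ρ / q') ^ 2 * (∑ x ∈ S, nu nbr ω x ^ q) ^ (1 / q) * dirichletEnergy T ω f := by
  have hd' : 0 < 1 - 1 / d := by rw [sub_pos, one_div]; exact inv_lt_one_of_one_lt₀ hd
  have hinv : ∀ x y, 0 ≤ (ω x y)⁻¹ := fun x y => inv_nonneg.2 (hnet.nonneg x y)
  have hexp' : 2 / (1 - 1 / d)⁻¹ = 1 / ρ + 1 / q' := by
    have := hq.inv_add_inv_eq_one
    rw [hexp, one_div q, one_div q', div_inv_eq_mul]
    linear_combination -this
  have hnu : ∑ x ∈ S, nu nbr ω x ^ q = ∑ x ∈ S, (∑ y ∈ T, (ω x y)⁻¹) ^ q :=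
    sum_congr rfl fun x hx => by rw [hnet.sum_inv_eq_nu (hnbr x hx)]
  rw [hnu]
  refine weighted_sobolev (w := fun x y => (ω x y)⁻¹) hST hnet.nonneg hinv
    (fun x y => mul_nonneg (hnet.nonneg x y) (hinv x y)) (fun x y => by rw [hnet.symm])
    (fun x y => ?_) hc ((one_le_inv₀ hd').2 ?_) hq hρ hexp' (fun A hAS hA => ?_) hf hsupp
  · rw [sq]
    exact mul_le_of_le_one_left (mul_nonneg (hnet.nonneg x y) (hinv x y)) mul_inv_le_one
  · exact sub_le_self _ (by positivity)
  · rw [one_div (1 - 1 / d)⁻¹, inv_inv]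
    exact (hiso A hA).trans (hnet.card_intBdry_le_totalVariation (hAS.trans hST)
      fun x hx => hnbr x (hAS hx))

theorem dirichletEnergy_le (hnet : IsNetwork G nbr ω) (hST : S ⊆ T) (hnbr : ∀ x ∈ S, nbr x ⊆ T)
    {u η : V → ℝ} {a δ p p' : ℝ} (hp : p.HolderConjugate p') (ha : 0 ≤ a) (ha4 : a ≤ 1 / 4)
    (hδ : 0 ≤ δ) (hu : ∀ x, 0 < u x) (hsuper : ∀ x ∈ S, lap nbr ω u x ≤ 0)
    (hη : ∀ x ∉ S, η x = 0) (hgrad : ∀ x y, G.Adj x y → (η x - η y) ^ 2 ≤ δ) :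
    dirichletEnergy T ω (fun x => η x * u x ^ a) ≤
      48 * δ * ((∑ x ∈ S, mu nbr ω x ^ p) ^ (1 / p) *
        (∑ x ∈ S, u x ^ (2 * a * p')) ^ (1 / p')) := by
  have hpow : ∀ x, ((u x ^ a) ^ 2) ^ p' = u x ^ (2 * a * p') := fun x => by
    rw [← Real.rpow_two, ← Real.rpow_mul (hu x).le, ← Real.rpow_mul (hu x).le, mul_comm a 2]
  calc dirichletEnergy T ω (fun x => η x * u x ^ a)
      ≤ 48 * δ * ∑ x ∈ S, (∑ y ∈ T, ω x y) * (u x ^ a) ^ 2 :=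
        caccioppoli hST hnet.nonneg hnet.symm ha ha4 hu hη
          (fun x hx => hnet.sum_mul_sub_nonpos (hnbr x hx) (hsuper x hx)) fun x y => by
            by_cases hxy : G.Adj x y
            · exact mul_le_mul_of_nonneg_left (hgrad x y hxy) (hnet.nonneg x y)
            · simp [hnet.eq_zero x y hxy]
    _ = 48 * δ * ∑ x ∈ S, mu nbr ω x * (u x ^ a) ^ 2 := by
        rw [sum_congr rfl fun x hx => by rw [hnet.sum_eq_mu (hnbr x hx)]]
    _ ≤ 48 * δ * ((∑ x ∈ S, mu nbr ω x ^ p) ^ (1 / p) *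
          (∑ x ∈ S, u x ^ (2 * a * p')) ^ (1 / p')) := by
        simp only [← hpow]
        gcongr
        exact Real.inner_le_Lp_mul_Lq_of_nonneg S hp (fun x _ => hnet.mu_nonneg x)
          fun x _ => sq_nonneg _

theorem sum_rpow_le_of_cutoff (hnet : IsNetwork G nbr ω) {d c p p' q q' ρ : ℝ} (hd : 1 < d)
    (hc : 0 ≤ c)
    (hiso : ∀ A : Finset V, A.Nonempty → c * (A.card : ℝ) ^ (1 - 1 / d) ≤ (intBdry G A).card)
    (hp : p.HolderConjugate p') (hq : q.HolderConjugate q') (hρ : 0 < ρ)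
    (hexp : 1 / ρ = 1 - 2 / d + 1 / q) {u η : V → ℝ} {β δ : ℝ} (hβ : 0 ≤ β) (hβρ : β ≤ ρ / 2)
    (hδ : 0 ≤ δ) (hu : ∀ x, 0 < u x) (hsuper : ∀ x ∈ S, lap nbr ω u x ≤ 0)
    {R : Finset V} (hRS : R ⊆ S) (hη0 : ∀ x, 0 ≤ η x) (hηR : ∀ x ∈ R, η x = 1)
    (hηS : ∀ x ∉ S, η x = 0) (hgrad : ∀ x y, G.Adj x y → (η x - η y) ^ 2 ≤ δ) :
    c ^ 2 * (∑ x ∈ R, u x ^ β) ^ (1 / ρ) ≤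
      192 * (1 + ρ / q') ^ 2 * δ * ((∑ x ∈ S, mu nbr ω x ^ p) ^ (1 / p) *
        (∑ x ∈ S, nu nbr ω x ^ q) ^ (1 / q)) * (∑ x ∈ S, u x ^ (β * p' / ρ)) ^ (1 / p') := by
  classical
  set T := S ∪ S.biUnion nbr
  have hST : S ⊆ T := subset_union_left
  have hnbr : ∀ x ∈ S, nbr x ⊆ T := fun x hx =>
    (subset_biUnion_of_mem nbr hx).trans subset_union_right
  set a := β / (2 * ρ) with ha
  set f : V → ℝ := fun x => η x * u x ^ a with hf
  have hf0 : ∀ x, 0 ≤ f x := fun x => mul_nonneg (hη0 x) (Real.rpow_nonneg (hu x).le _)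
  have hfR : ∀ x ∈ R, u x ^ β = f x ^ (2 * ρ) := fun x hx => by
    simp only [hf]
    rw [hηR x hx, one_mul, ← Real.rpow_mul (hu x).le, ha, div_mul_cancel₀ _ (by positivity)]
  have hR : ∑ x ∈ R, u x ^ β ≤ ∑ x ∈ S, f x ^ (2 * ρ) := by
    rw [sum_congr rfl hfR]
    exact sum_le_sum_of_subset_of_nonneg hRS fun x _ _ => Real.rpow_nonneg (hf0 x) _
  have henergy := hnet.dirichletEnergy_le hST hnbr hp (show 0 ≤ a by positivity)
    (by rw [ha, div_le_iff₀ (by positivity)]; linarith) hδ hu hsuper hηS hgrad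
  rw [show 2 * a * p' = β * p' / ρ by rw [ha]; field_simp] at henergy
  have hnu : 0 ≤ (∑ x ∈ S, nu nbr ω x ^ q) ^ (1 / q) :=
    Real.rpow_nonneg (sum_nonneg fun x _ => Real.rpow_nonneg (hnet.nu_nonneg x) _) _
  calc c ^ 2 * (∑ x ∈ R, u x ^ β) ^ (1 / ρ)
      ≤ c ^ 2 * (∑ x ∈ S, f x ^ (2 * ρ)) ^ (1 / ρ) := by
        gcongr
        exact sum_nonneg fun x _ => Real.rpow_nonneg (hu x).le _
    _ ≤ 4 * (1 + ρ / q') ^ 2 * (∑ x ∈ S, nu nbr ω x ^ q) ^ (1 / q) * dirichletEnergy T ω f :=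
        hnet.sobolev hST hnbr hd hc hiso hq hρ hexp hf0 fun x hx => by simp [hf, hηS x hx]
    _ ≤ 4 * (1 + ρ / q') ^ 2 * (∑ x ∈ S, nu nbr ω x ^ q) ^ (1 / q) * (48 * δ *
          ((∑ x ∈ S, mu nbr ω x ^ p) ^ (1 / p) * (∑ x ∈ S, u x ^ (β * p' / ρ)) ^ (1 / p'))) := by
        gcongr
    _ = _ := by ring

end IsNetwork

end Network

section AveragedNorm

variable {V : Type*} {A B : Finset V} {f : V → ℝ}

theorem nrm_nonneg (A : Finset V) (s : ℝ) (f : V → ℝ) : 0 ≤ nrm A s f :=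
  Real.rpow_nonneg (mul_nonneg (by positivity)
    (sum_nonneg fun x _ => Real.rpow_nonneg (abs_nonneg _) _)) _

theorem nrm_le_nrm_of_le (hA : A.Nonempty) {s t : ℝ} (hs : 0 < s) (hst : s ≤ t) (f : V → ℝ) :
    nrm A s f ≤ nrm A t f := by
  have hcard : (0 : ℝ) < A.card := by exact_mod_cast hA.card_pos
  have ht : 0 < t := hs.trans_le hst
  have hmean : 0 ≤ (A.card : ℝ)⁻¹ * ∑ x ∈ A, |f x| ^ s :=
    mul_nonneg (by positivity) (sum_nonneg fun x _ => Real.rpow_nonneg (abs_nonneg _) _)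
  have hjensen := Real.rpow_arith_mean_le_arith_mean_rpow A (fun _ => (A.card : ℝ)⁻¹)
    (fun x => |f x| ^ s) (fun _ _ => by positivity) (by simp [hcard.ne'])
    (fun _ _ => Real.rpow_nonneg (abs_nonneg _) _) (p := t / s) ((one_le_div hs).2 hst)
  simp only [← mul_sum, ← Real.rpow_mul (abs_nonneg _), mul_div_cancel₀ t hs.ne'] at hjensen
  have hroot := Real.rpow_le_rpow (Real.rpow_nonneg hmean _) hjensen (one_div_nonneg.2 ht.le)
  rwa [← Real.rpow_mul hmean, show t / s * (1 / t) = 1 / s by field_simp] at hroot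

theorem nrm_le_of_forall_abs_le (hA : A.Nonempty) {s M : ℝ} (hs : 0 < s)
    (hf : ∀ x ∈ A, |f x| ≤ M) : nrm A s f ≤ M := by
  have hcard : (0 : ℝ) < A.card := by exact_mod_cast hA.card_pos
  have hM : 0 ≤ M := (abs_nonneg _).trans (hf _ hA.choose_spec)
  rw [nrm, one_div, Real.rpow_inv_le_iff_of_pos (mul_nonneg (by positivity)
    (sum_nonneg fun x _ => Real.rpow_nonneg (abs_nonneg _) _)) hM hs,
    inv_mul_le_iff₀ hcard, ← nsmul_eq_mul]
  exact sum_le_card_nsmul _ _ _ fun x hx => Real.rpow_le_rpow (abs_nonneg _) (hf x hx) hs.le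

theorem nrm_le_nrmE (hA : A.Nonempty) {s : ℝ} (hs : 0 < s) {p : ℝ≥0∞}
    (hsp : ENNReal.ofReal s ≤ p) (f : V → ℝ) : nrm A s f ≤ nrmE A p f := by
  unfold nrmE
  split_ifs with hp
  · exact nrm_le_of_forall_abs_le hA hs fun x hx =>
      le_csSup (A.finite_toSet.image _).bddAbove ⟨x, hx, rfl⟩
  · exact nrm_le_nrm_of_le hA hs ((ENNReal.ofReal_le_iff_le_toReal hp).1 hsp) f

theorem sum_rpow_rpow_eq_card_mul_nrm (hA : A.Nonempty) {s : ℝ} (hs : s ≠ 0) (t : ℝ)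
    (hf : ∀ x, 0 ≤ f x) :
    (∑ x ∈ A, f x ^ s) ^ t = (A.card : ℝ) ^ t * nrm A s f ^ (s * t) := by
  have hcard : (0 : ℝ) < A.card := by exact_mod_cast hA.card_pos
  have hmean : 0 ≤ (A.card : ℝ)⁻¹ * ∑ x ∈ A, f x ^ s :=
    mul_nonneg (by positivity) (sum_nonneg fun x _ => Real.rpow_nonneg (hf x) _)
  simp only [nrm, abs_of_nonneg (hf _)]
  rw [← Real.rpow_mul hmean, ← mul_assoc, one_div_mul_cancel hs, one_mul,
    ← Real.mul_rpow hcard.le hmean, mul_inv_cancel_left₀ hcard.ne']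

theorem sum_rpow_rpow_inv_le_card_mul_nrm (hAB : A ⊆ B) (hB : B.Nonempty) {s : ℝ} (hs : 0 < s)
    (hf : ∀ x, 0 ≤ f x) :
    (∑ x ∈ A, f x ^ s) ^ (1 / s) ≤ (B.card : ℝ) ^ (1 / s) * nrm B s f := by
  refine (Real.rpow_le_rpow (sum_nonneg fun x _ => Real.rpow_nonneg (hf x) _)
    (sum_le_sum_of_subset_of_nonneg hAB fun x _ _ => Real.rpow_nonneg (hf x) _)
    (one_div_nonneg.2 hs.le)).trans_eq ?_
  rw [sum_rpow_rpow_eq_card_mul_nrm hB hs.ne' _ hf, mul_one_div_cancel hs.ne', Real.rpow_one]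

end AveragedNorm

section OneStep

variable {V : Type*} {G : SimpleGraph V} {nbr : V → Finset V} {ω : V → V → ℝ}
  {ball : V → ℝ → Finset V} {d : ℕ} {Creg Criso p p' q q' ρ n σ' σ : ℝ}

theorem IsBallFamily.nonempty (hball : IsBallFamily G ball) (x : V) {r : ℝ} (hr : 0 ≤ r) :
    (ball x r).Nonempty :=
  ⟨x, by rwa [hball, SimpleGraph.dist_self, Nat.cast_zero]⟩

theorem VolumeRegular.card_ball_le (hreg : VolumeRegular ball d Creg) (hball : IsBallFamily G ball)
    (hCreg : 0 < Creg) (x : V) (hn : 1 ≤ n) (hσ : 1 / 2 ≤ σ) :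
    ((ball x n).card : ℝ) ≤ Creg ^ 2 * 2 ^ d * (ball x (σ * n)).card := by
  have hCreg1 : 1 ≤ Creg := hreg.one_le hCreg x
  have hcard : (1 : ℝ) ≤ (ball x (σ * n)).card := by
    exact_mod_cast (hball.nonempty x (by nlinarith)).card_pos
  refine (hreg x n hn).2.trans ?_
  rcases le_or_gt 1 (σ * n) with h | h
  · have hvol := (hreg x (σ * n) h).1
    rw [inv_mul_le_iff₀ hCreg] at hvol
    calc Creg * n ^ d ≤ Creg * (2 * (σ * n)) ^ d := by gcongr; nlinarith
      _ = Creg * 2 ^ d * (σ * n) ^ d := by rw [mul_pow, mul_assoc]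
      _ ≤ Creg * 2 ^ d * (Creg * (ball x (σ * n)).card) := by gcongr
      _ = Creg ^ 2 * 2 ^ d * (ball x (σ * n)).card := by ring
  · calc Creg * n ^ d ≤ Creg * 2 ^ d := by gcongr; nlinarith
      _ ≤ Creg ^ 2 * 2 ^ d := by gcongr; nlinarith
      _ ≤ Creg ^ 2 * 2 ^ d * (ball x (σ * n)).card := le_mul_of_one_le_right (by positivity) hcard

theorem VolumeRegular.card_rpow_mul_le (hreg : VolumeRegular ball d Creg)
    (hball : IsBallFamily G ball) (hCreg : 0 < Creg) (hd : d ≠ 0) (hp : p.HolderConjugate p')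
    (hρ : 0 < ρ) (hexp : 1 / ρ = 1 - 2 / d + 1 / q) (x : V) (hn : 1 ≤ n) (hσ' : 1 / 2 ≤ σ')
    (hσ1 : σ ≤ 1) :
    ((ball x n).card : ℝ) ^ (1 / p) * ((ball x n).card : ℝ) ^ (1 / q) *
        ((ball x (σ * n)).card : ℝ) ^ (1 / p') ≤
      (Creg ^ 2 * 2 ^ d) ^ (1 / ρ) * ((ball x (σ' * n)).card : ℝ) ^ (1 / ρ) *
        (Creg ^ (2 / (d : ℝ)) * n ^ 2) := by
  have hp' : 0 < p' := hp.symm.pos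
  have hb0 : (0 : ℝ) < (ball x n).card := by
    exact_mod_cast (hball.nonempty x (by linarith)).card_pos
  have hmono : ((ball x (σ * n)).card : ℝ) ≤ (ball x n).card := by
    exact_mod_cast card_le_card (hball.ball_subset_ball (by nlinarith))
  set b : ℝ := ((ball x n).card : ℝ)
  have hexponents : 1 / p + 1 / q + 1 / p' = 1 / ρ + 2 / d := by
    have := hp.inv_add_inv_eq_one
    rw [hexp, one_div p, one_div p']
    linarith
  have hn2 : (n ^ d) ^ (2 / (d : ℝ)) = n ^ 2 := by
    rw [← Real.rpow_natCast, ← Real.rpow_mul (by positivity),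
      mul_div_cancel₀ _ (Nat.cast_ne_zero.2 hd), Real.rpow_two]
  calc b ^ (1 / p) * b ^ (1 / q) * ((ball x (σ * n)).card : ℝ) ^ (1 / p')
      ≤ b ^ (1 / p) * b ^ (1 / q) * b ^ (1 / p') := by gcongr
    _ = b ^ (1 / ρ) * b ^ (2 / (d : ℝ)) := by
        rw [← Real.rpow_add hb0, ← Real.rpow_add hb0, ← Real.rpow_add hb0, hexponents]
    _ ≤ (Creg ^ 2 * 2 ^ d * (ball x (σ' * n)).card) ^ (1 / ρ) *
          (Creg * n ^ d) ^ (2 / (d : ℝ)) := by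
        gcongr
        exacts [hreg.card_ball_le hball hCreg x hn hσ', (hreg x n hn).2]
    _ = _ := by
        rw [Real.mul_rpow (by positivity) (by positivity), Real.mul_rpow hCreg.le (by positivity),
          hn2]

/-- The constant in one step of the iteration; `c` is an isoperimetric constant, and `q'` is the
exponent conjugate to `q`. -/
def stepConst (d : ℕ) (Creg c q' ρ : ℝ) : ℝ :=
  192 * (1 + ρ / q') ^ 2 / c ^ 2 * (Creg ^ 2 * 2 ^ d) ^ (1 / ρ) * Creg ^ (2 / (d : ℝ))

theorem stepConst_nonneg (hCreg : 0 ≤ Creg) (c q' ρ : ℝ) : 0 ≤ stepConst d Creg c q' ρ := by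
  unfold stepConst; positivity

variable {x₀ : V} {u : V → ℝ} {β : ℝ}

namespace IsNetwork

theorem sum_rpow_ball_le (hnet : IsNetwork G nbr ω) (hball : IsBallFamily G ball) (hd : 2 ≤ d)
    {c : ℝ} (hc : 0 ≤ c) (hiso : ∀ A : Finset V, A.Nonempty →
      c * (A.card : ℝ) ^ (1 - 1 / (d : ℝ)) ≤ (intBdry G A).card)
    (hp : p.HolderConjugate p') (hq : q.HolderConjugate q') (hρ : 0 < ρ)
    (hexp : 1 / ρ = 1 - 2 / d + 1 / q) (hn : 0 < n) (hu : ∀ x, 0 < u x)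
    (hsuper : ∀ x ∈ ball x₀ n, lap nbr ω u x ≤ 0) (hβ : 0 ≤ β) (hβρ : β ≤ ρ / 2)
    (hσσ : σ' < σ) (hσ1 : σ ≤ 1) :
    c ^ 2 * (∑ x ∈ ball x₀ (σ' * n), u x ^ β) ^ (1 / ρ) ≤
      192 * (1 + ρ / q') ^ 2 * (((σ - σ') * n) ^ 2)⁻¹ *
        ((∑ x ∈ ball x₀ (σ * n), mu nbr ω x ^ p) ^ (1 / p) *
          (∑ x ∈ ball x₀ (σ * n), nu nbr ω x ^ q) ^ (1 / q)) *
        (∑ x ∈ ball x₀ (σ * n), u x ^ (β * p' / ρ)) ^ (1 / p') := by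
  have hcut : σ' * n < σ * n := by gcongr
  have hsub : ball x₀ (σ * n) ⊆ ball x₀ n :=
    hball.ball_subset_ball (mul_le_of_le_one_left hn.le hσ1)
  rw [sub_mul]
  exact hnet.sum_rpow_le_of_cutoff (d := d) (by exact_mod_cast hd) hc hiso hp hq hρ hexp hβ hβρ
    (by positivity) hu (fun x hx => hsuper x (hsub hx)) (hball.ball_subset_ball hcut.le)
    (fun x => cutoff_nonneg) (fun x hx => cutoff_eq_one hcut ((hball _ _ _).1 hx))
    (fun x hx => cutoff_eq_zero hcut.le (not_le.1 (mt (hball _ _ _).2 hx)).le)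
    fun x y hxy => sq_cutoff_dist_sub_le hxy x₀ hcut.le

theorem card_rpow_mul_nrm_rpow_ball_le (hnet : IsNetwork G nbr ω) (hball : IsBallFamily G ball)
    (hd : 2 ≤ d) {c : ℝ} (hc : 0 ≤ c) (hiso : ∀ A : Finset V, A.Nonempty →
      c * (A.card : ℝ) ^ (1 - 1 / (d : ℝ)) ≤ (intBdry G A).card)
    (hp : p.HolderConjugate p') (hq : q.HolderConjugate q') (hρ : 0 < ρ)
    (hexp : 1 / ρ = 1 - 2 / d + 1 / q) (hn : 0 < n) (hu : ∀ x, 0 < u x)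
    (hsuper : ∀ x ∈ ball x₀ n, lap nbr ω u x ≤ 0) (hβ : 0 < β) (hβρ : β ≤ ρ / 2)
    (hσ' : 0 ≤ σ') (hσσ : σ' < σ) (hσ1 : σ ≤ 1) :
    c ^ 2 * ((ball x₀ (σ' * n)).card : ℝ) ^ (1 / ρ) * nrm (ball x₀ (σ' * n)) β u ^ (β / ρ) ≤
      192 * (1 + ρ / q') ^ 2 * (((σ - σ') * n) ^ 2)⁻¹ *
        (nrm (ball x₀ n) p (mu nbr ω) * nrm (ball x₀ n) q (nu nbr ω)) *
        nrm (ball x₀ (σ * n)) (β * p' / ρ) u ^ (β / ρ) *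
        (((ball x₀ n).card : ℝ) ^ (1 / p) * ((ball x₀ n).card : ℝ) ^ (1 / q) *
          ((ball x₀ (σ * n)).card : ℝ) ^ (1 / p')) := by
  have hp' : 0 < p' := hp.symm.pos
  have hσ : 0 ≤ σ := hσ'.trans hσσ.le
  have hne : ∀ {r : ℝ}, 0 ≤ r → (ball x₀ r).Nonempty := hball.nonempty x₀
  have hsub : ball x₀ (σ * n) ⊆ ball x₀ n :=
    hball.ball_subset_ball (mul_le_of_le_one_left hn.le hσ1)
  have hsum := hnet.sum_rpow_ball_le hball hd hc hiso hp hq hρ hexp hn hu hsuper hβ.le hβρ hσσ hσ1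
  have hmu := sum_rpow_rpow_inv_le_card_mul_nrm hsub (hne hn.le) hp.pos hnet.mu_nonneg
  have hnu := sum_rpow_rpow_inv_le_card_mul_nrm hsub (hne hn.le) hq.pos hnet.nu_nonneg
  have hnu0 : 0 ≤ (∑ x ∈ ball x₀ (σ * n), nu nbr ω x ^ q) ^ (1 / q) :=
    Real.rpow_nonneg (sum_nonneg fun x _ => Real.rpow_nonneg (hnet.nu_nonneg x) _) _
  have hm := nrm_nonneg (ball x₀ n) p (mu nbr ω)
  have hY := Real.rpow_nonneg (nrm_nonneg (ball x₀ (σ * n)) (β * p' / ρ) u) (β / ρ)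
  rw [sum_rpow_rpow_eq_card_mul_nrm (hne (by positivity)) hβ.ne' _ fun x => (hu x).le,
    sum_rpow_rpow_eq_card_mul_nrm (hne (by positivity)) (by positivity) _ fun x => (hu x).le,
    mul_one_div β ρ, show β * p' / ρ * (1 / p') = β / ρ by field_simp, ← mul_assoc] at hsum
  refine (hsum.trans (mul_le_mul_of_nonneg_right (mul_le_mul_of_nonneg_left
    (mul_le_mul hmu hnu hnu0 ?_) ?_) ?_)).trans_eq ?_
  · positivity
  · positivity
  · positivity
  · ring

theorem nrm_rpow_ball_le (hnet : IsNetwork G nbr ω) (hball : IsBallFamily G ball) (hd : 2 ≤ d)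
    (hreg : VolumeRegular ball d Creg) (hCreg : 0 < Creg) {c : ℝ} (hc : 0 < c)
    (hiso : ∀ A : Finset V, A.Nonempty →
      c * (A.card : ℝ) ^ (1 - 1 / (d : ℝ)) ≤ (intBdry G A).card)
    (hp : p.HolderConjugate p') (hq : q.HolderConjugate q') (hρ : 0 < ρ)
    (hexp : 1 / ρ = 1 - 2 / d + 1 / q) (hn : 1 ≤ n) (hu : ∀ x, 0 < u x)
    (hsuper : ∀ x ∈ ball x₀ n, lap nbr ω u x ≤ 0) (hβ : 0 < β) (hβρ : β ≤ ρ / 2)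
    (hσ' : 1 / 2 ≤ σ') (hσσ : σ' < σ) (hσ1 : σ ≤ 1) :
    nrm (ball x₀ (σ' * n)) β u ^ (β / ρ) ≤
      stepConst d Creg c q' ρ * (nrm (ball x₀ n) p (mu nbr ω) * nrm (ball x₀ n) q (nu nbr ω)) /
        (σ - σ') ^ 2 * nrm (ball x₀ (σ * n)) (β * p' / ρ) u ^ (β / ρ) := by
  have hn0 : 0 < n := by linarith
  have hσ'0 : 0 ≤ σ' := by linarith
  have hσσ0 : σ - σ' ≠ 0 := (sub_pos.2 hσσ).ne'
  have hvol := hreg.card_rpow_mul_le hball hCreg (by lia) hp hρ hexp x₀ hn hσ' hσ1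
  have hb' : (0 : ℝ) < (ball x₀ (σ' * n)).card := by
    exact_mod_cast (hball.nonempty x₀ (by positivity)).card_pos
  have hm := nrm_nonneg (ball x₀ n) p (mu nbr ω)
  have hv := nrm_nonneg (ball x₀ n) q (nu nbr ω)
  have hY := Real.rpow_nonneg (nrm_nonneg (ball x₀ (σ * n)) (β * p' / ρ) u) (β / ρ)
  refine le_of_mul_le_mul_left ?_
    (show 0 < c ^ 2 * ((ball x₀ (σ' * n)).card : ℝ) ^ (1 / ρ) by positivity)
  refine ((hnet.card_rpow_mul_nrm_rpow_ball_le hball hd hc.le hiso hp hq hρ hexp hn0 hu hsuper hβ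
    hβρ hσ'0 hσσ hσ1).trans (mul_le_mul_of_nonneg_left hvol (by positivity))).trans_eq ?_
  unfold stepConst
  field_simp

theorem nrm_ball_le (hnet : IsNetwork G nbr ω) (hball : IsBallFamily G ball) (hd : 2 ≤ d)
    (hreg : VolumeRegular ball d Creg) (hCreg : 0 < Creg) (hiso : RelIsoperimetric G ball Criso)
    (hCriso : 0 < Criso) (hp : p.HolderConjugate p') (hq : q.HolderConjugate q') (hρ : 0 < ρ)
    (hexp : 1 / ρ = 1 - 2 / d + 1 / q) (hn : 1 ≤ n) (hu : ∀ x, 0 < u x)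
    (hsuper : ∀ x ∈ ball x₀ n, lap nbr ω u x ≤ 0) (hβ : 0 < β) (hβρ : β ≤ ρ / 2)
    (hσ' : 1 / 2 ≤ σ') (hσσ : σ' < σ) (hσ1 : σ ≤ 1) :
    nrm (ball x₀ (σ' * n)) β u ≤
      (stepConst d Creg (isoConst d Creg Criso) q' ρ *
        (nrm (ball x₀ n) p (mu nbr ω) * nrm (ball x₀ n) q (nu nbr ω)) / (σ - σ') ^ 2) ^ (ρ / β) *
          nrm (ball x₀ (σ * n)) (β / (ρ / p')) u := by
  rw [div_div_eq_mul_div β]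
  have hstep := hnet.nrm_rpow_ball_le hball hd hreg hCreg (isoConst_pos hCreg hCriso)
    (fun A hA => isoConst_mul_card_rpow_le_card_intBdry (by lia) hball hreg hCreg hiso hCriso hA)
    hp hq hρ hexp hn hu hsuper hβ hβρ hσ' hσσ hσ1
  have hX := nrm_nonneg (ball x₀ (σ' * n)) β u
  have hY := nrm_nonneg (ball x₀ (σ * n)) (β * p' / ρ) u
  have hA : 0 ≤ stepConst d Creg (isoConst d Creg Criso) q' ρ *
      (nrm (ball x₀ n) p (mu nbr ω) * nrm (ball x₀ n) q (nu nbr ω)) / (σ - σ') ^ 2 :=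
    div_nonneg (mul_nonneg (stepConst_nonneg hCreg.le _ _ _)
      (mul_nonneg (nrm_nonneg _ _ _) (nrm_nonneg _ _ _))) (sq_nonneg _)
  have hroot := Real.rpow_le_rpow (Real.rpow_nonneg hX _) hstep (div_nonneg hρ.le hβ.le)
  rwa [Real.mul_rpow hA (Real.rpow_nonneg hY _), ← Real.rpow_mul hX, ← Real.rpow_mul hY,
    div_mul_div_cancel₀ hρ.ne', div_self hβ.ne', Real.rpow_one, Real.rpow_one] at hroot

theorem nrm_ball_le_max (hnet : IsNetwork G nbr ω) (hball : IsBallFamily G ball) (hd : 2 ≤ d)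
    (hreg : VolumeRegular ball d Creg) (hCreg : 0 < Creg) (hiso : RelIsoperimetric G ball Criso)
    (hCriso : 0 < Criso) (hp : p.HolderConjugate p') (hq : q.HolderConjugate q') {P Q : ℝ≥0∞}
    (hpP : ENNReal.ofReal p ≤ P) (hqQ : ENNReal.ofReal q ≤ Q) (hρ : 0 < ρ)
    (hexp : 1 / ρ = 1 - 2 / d + 1 / q) (hn : 1 ≤ n) (hu : ∀ x, 0 < u x)
    (hsuper : ∀ x ∈ ball x₀ n, lap nbr ω u x ≤ 0) (hβ : 0 < β) (hβρ : β ≤ ρ / 2)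
    (hσ' : 1 / 2 ≤ σ') (hσσ : σ' < σ) (hσ1 : σ ≤ 1) :
    nrm (ball x₀ (σ' * n)) β u ≤
      ((1 + stepConst d Creg (isoConst d Creg Criso) q' ρ) *
        max 1 (nrmE (ball x₀ n) P (mu nbr ω) * nrmE (ball x₀ n) Q (nu nbr ω)) /
          (σ - σ') ^ 2) ^ (ρ / β) * nrm (ball x₀ (σ * n)) (β / (ρ / p')) u := by
  have hne : (ball x₀ n).Nonempty := hball.nonempty x₀ (by linarith)
  have hm := nrm_nonneg (ball x₀ n) p (mu nbr ω)
  have hv := nrm_nonneg (ball x₀ n) q (nu nbr ω)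
  have hC := stepConst_nonneg hCreg.le (isoConst d Creg Criso) q' ρ (d := d)
  have hmE := nrm_le_nrmE hne hp.pos hpP (mu nbr ω)
  have hmv : nrm (ball x₀ n) p (mu nbr ω) * nrm (ball x₀ n) q (nu nbr ω) ≤
      max 1 (nrmE (ball x₀ n) P (mu nbr ω) * nrmE (ball x₀ n) Q (nu nbr ω)) :=
    (mul_le_mul hmE (nrm_le_nrmE hne hq.pos hqQ _) hv (hm.trans hmE)).trans (le_max_right _ _)
  refine (hnet.nrm_ball_le hball hd hreg hCreg hiso hCriso hp hq hρ hexp hn hu hsuper hβ hβρ hσ'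
    hσσ hσ1).trans (mul_le_mul_of_nonneg_right ?_ (nrm_nonneg _ _ _))
  gcongr
  exact le_add_of_nonneg_left zero_le_one

end IsNetwork

end OneStep

section Iteration

variable {Φ : ℝ → ℝ → ℝ} {ρ χ A β₀ α β σ' σ : ℝ}

/- The factor `4 ^ e` lost by halving the gap `g` in the first factor is absorbed by the factor
`4 ^ s` missing from the base of the second one. -/
theorem rpow_half_mul_rpow_half_le {g s e f : ℝ} (hA : 0 < A) (hg : g ≠ 0) (hef : e ≤ s * f) :
    (A * 4 ^ (1 + s) / (g / 2) ^ 2) ^ e * (A / (g / 2) ^ 2) ^ f ≤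
      (A * 4 ^ (1 + s) / g ^ 2) ^ (e + f) := by
  set Y := A * (4 : ℝ) ^ (1 + s) / g ^ 2 with hY
  have hY0 : 0 < Y := by positivity
  have hfirst : A * 4 ^ (1 + s) / (g / 2) ^ 2 = Y * 4 := by
    rw [hY]; field_simp; norm_num
  have hlast : A / (g / 2) ^ 2 = Y * 4 ^ (-s) := by
    rw [hY, Real.rpow_add (by norm_num), Real.rpow_neg (by norm_num), Real.rpow_one]
    field_simp; norm_num
  calc (A * 4 ^ (1 + s) / (g / 2) ^ 2) ^ e * (A / (g / 2) ^ 2) ^ f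
      = Y ^ (e + f) * 4 ^ (e - s * f) := by
        rw [hfirst, hlast, Real.mul_rpow hY0.le (by norm_num),
          Real.mul_rpow hY0.le (by positivity), ← Real.rpow_mul (by norm_num), mul_mul_mul_comm,
          ← Real.rpow_add hY0, ← Real.rpow_add (by norm_num), neg_mul, ← sub_eq_add_neg]
    _ ≤ Y ^ (e + f) := mul_le_of_le_one_right (by positivity)
        (Real.rpow_le_one_of_one_le_of_nonpos (by norm_num) (sub_nonpos.2 hef))

theorem iterate_exponent_le (hΦ : ∀ b τ, 0 ≤ Φ b τ) (hρ : 0 < ρ) (hχ : 1 < χ) (hA : 0 < A)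
    (hstep : ∀ b, 0 < b → b ≤ β₀ → ∀ τ' τ, 1 / 2 ≤ τ' → τ' < τ → τ ≤ 1 →
      Φ b τ' ≤ (A / (τ - τ') ^ 2) ^ (ρ / b) * Φ (b / χ) τ) (K : ℕ)
    (hβ : 0 < β) (hβ₀ : β ≤ β₀) (hσ' : 1 / 2 ≤ σ') (hσσ : σ' < σ) (hσ1 : σ ≤ 1) :
    Φ β σ' ≤ (A * 4 ^ (1 + 1 / (χ - 1)) / (σ - σ') ^ 2) ^
      (ρ / (χ - 1) * (χ ^ (K + 1) - 1) / β) * Φ (β / χ ^ (K + 1)) σ := by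
  have hχ1 : 0 < χ - 1 := sub_pos.2 hχ
  induction K generalizing σ with
  | zero =>
    rw [zero_add, pow_one, div_mul_cancel₀ ρ hχ1.ne']
    refine (hstep β hβ hβ₀ σ' σ hσ' hσσ hσ1).trans (mul_le_mul_of_nonneg_right ?_ (hΦ _ _))
    gcongr
    exact le_mul_of_one_le_right hA.le (Real.one_le_rpow (by norm_num) (by positivity))
  | succ K ih =>
    set L := χ ^ (K + 1) with hL
    set e := ρ / (χ - 1) * (L - 1) / β with he
    have hfirst := ih (σ := (σ' + σ) / 2) (by linarith) (by linarith)
    have hlast := hstep (β / L) (by positivity)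
      ((div_le_self hβ.le (one_le_pow₀ hχ.le)).trans hβ₀) ((σ' + σ) / 2) σ (by linarith)
      (by linarith) hσ1
    rw [show (σ' + σ) / 2 - σ' = (σ - σ') / 2 by ring] at hfirst
    rw [show σ - (σ' + σ) / 2 = (σ - σ') / 2 by ring] at hlast
    have hef : e ≤ 1 / (χ - 1) * (ρ / (β / L)) := by
      have : 1 / (χ - 1) * (ρ / (β / L)) - e = ρ / (χ - 1) / β := by
        rw [he]; field_simp; ring
      linarith [show 0 < ρ / (χ - 1) / β by positivity]
    have hsum : ρ / (χ - 1) * (χ ^ (K + 1 + 1) - 1) / β = e + ρ / (β / L) := by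
      rw [pow_succ, ← hL, he]; field_simp; ring
    rw [hsum, pow_succ χ, ← hL, ← div_div]
    refine hfirst.trans ((mul_le_mul_of_nonneg_left hlast (by positivity)).trans ?_)
    rw [← mul_assoc]
    exact mul_le_mul_of_nonneg_right
      (rpow_half_mul_rpow_half_le hA (sub_pos.2 hσσ).ne' hef) (hΦ _ _)

theorem mul_pow_succ_sub_one_div_le {k : ℝ} (hk : 0 ≤ k) (hχ : 0 < χ) (hα : 0 < α)
    (hαβ : α ≤ β / 2) {K : ℕ} (hK : χ ^ K ≤ β / α) :
    k * (χ ^ (K + 1) - 1) / β ≤ 2 * (k * χ) * (1 / α - 1 / β) := by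
  have hβ : 0 < β := by linarith
  have hpow : χ ^ (K + 1) / β ≤ χ / α := by
    rw [pow_succ, div_le_div_iff₀ hβ hα]
    rw [le_div_iff₀ hα] at hK
    nlinarith
  have hhalf : 1 / α ≤ 2 * (1 / α - 1 / β) := by
    have : 1 / β ≤ 1 / (α * 2) := one_div_le_one_div_of_le (by positivity) (by linarith)
    rw [← div_div] at this
    linarith
  calc k * (χ ^ (K + 1) - 1) / β ≤ k * (χ ^ (K + 1) / β) := by
        rw [mul_div_assoc]; gcongr; exact sub_le_self _ zero_le_one
    _ ≤ k * (χ * (1 / α)) := by rw [mul_one_div]; gcongr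
    _ ≤ k * (χ * (2 * (1 / α - 1 / β))) := by gcongr
    _ = 2 * (k * χ) * (1 / α - 1 / β) := by ring

theorem le_rpow_mul_of_exponent_step (hΦ : ∀ b τ, 0 ≤ Φ b τ) (hρ : 0 < ρ) (hχ : 1 < χ)
    (hA : 1 ≤ A)
    (hstep : ∀ b, 0 < b → b ≤ β₀ → ∀ τ' τ, 1 / 2 ≤ τ' → τ' < τ → τ ≤ 1 →
      Φ b τ' ≤ (A / (τ - τ') ^ 2) ^ (ρ / b) * Φ (b / χ) τ)
    (hmono : ∀ a b, 0 < a → a ≤ b → Φ a σ ≤ Φ b σ)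
    (hα : 0 < α) (hαβ : α ≤ β / 2) (hβ₀ : β ≤ β₀) (hσ' : 1 / 2 ≤ σ') (hσσ : σ' < σ)
    (hσ1 : σ ≤ 1) :
    Φ β σ' ≤ (A * 4 ^ (1 + 1 / (χ - 1)) / (σ - σ') ^ 2) ^
      (2 * (ρ / (χ - 1) * χ) * (1 / α - 1 / β)) * Φ α σ := by
  have hχ0 : 0 < χ := one_pos.trans hχ
  have hβ : 0 < β := by linarith
  obtain ⟨K, hKle, hKlt⟩ := exists_nat_pow_near ((one_le_div hα).2 (by linarith : α ≤ β)) hχ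
  have hreach : β / χ ^ (K + 1) ≤ α := by
    rw [div_lt_iff₀ hα] at hKlt
    rw [div_le_iff₀ (by positivity), mul_comm]
    exact hKlt.le
  have hbase : 1 ≤ A * 4 ^ (1 + 1 / (χ - 1)) / (σ - σ') ^ 2 := by
    rw [one_le_div (pow_pos (sub_pos.2 hσσ) 2)]
    exact (pow_le_one₀ (by linarith) (by linarith)).trans
      (one_le_mul_of_one_le_of_one_le hA (Real.one_le_rpow (by norm_num) (by positivity)))
  refine (iterate_exponent_le hΦ hρ hχ (by linarith) hstep K hβ hβ₀ hσ' hσσ hσ1).trans ?_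
  exact mul_le_mul (Real.rpow_le_rpow_of_exponent_le hbase
      (mul_pow_succ_sub_one_div_le (by positivity) hχ0 hα hαβ hKle))
    (hmono _ _ (by positivity) hreach) (hΦ _ _) (by positivity)

end Iteration

section Exponents

variable {d : ℕ} {p q : ℝ≥0∞} {ρ : ℝ}

theorem ofReal_inv_le_of_inv_le_ofReal {r : ℝ} (hr : 0 < r) (h : p⁻¹ ≤ ENNReal.ofReal r) :
    ENNReal.ofReal r⁻¹ ≤ p := by
  rwa [ENNReal.ofReal_inv_of_pos hr, ENNReal.inv_le_iff_inv_le]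

theorem exists_finite_exponents (hd : 2 ≤ d) (hp : p⁻¹ < ENNReal.ofReal (1 - ρ⁻¹))
    (hq : q⁻¹ < ENNReal.ofReal (ρ⁻¹ + 2 / d - 1)) :
    0 < ρ ∧ ∃ s t : ℝ, 1 < s ∧ 1 < t ∧ ENNReal.ofReal s ≤ p ∧ ENNReal.ofReal t ≤ q ∧
      s⁻¹ + ρ⁻¹ < 1 ∧ 1 / ρ = 1 - 2 / d + 1 / t := by
  have hd2 : 2 / (d : ℝ) ≤ 1 := (div_le_one (by positivity)).2 (by exact_mod_cast hd)
  have ht : 0 < ρ⁻¹ + 2 / d - 1 := ENNReal.ofReal_pos.1 (zero_le.trans_lt hq)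
  have hρ1 : 0 < 1 - ρ⁻¹ := ENNReal.ofReal_pos.1 (zero_le.trans_lt hp)
  have hρ : 0 < ρ⁻¹ := by linarith
  obtain ⟨r, -, hpr, hrρ⟩ := ENNReal.lt_iff_exists_real_btwn.1 hp
  have hr : 0 < r := ENNReal.ofReal_pos.1 (zero_le.trans_lt hpr)
  have hrρ' : r < 1 - ρ⁻¹ := (ENNReal.ofReal_lt_ofReal_iff hρ1).1 hrρ
  refine ⟨inv_pos.1 hρ, r⁻¹, (ρ⁻¹ + 2 / d - 1)⁻¹, (one_lt_inv₀ hr).2 (by linarith),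
    (one_lt_inv₀ ht).2 (by linarith), ofReal_inv_le_of_inv_le_ofReal hr hpr.le,
    ofReal_inv_le_of_inv_le_ofReal ht hq.le, ?_, ?_⟩
  · rw [inv_inv]; linarith
  · rw [one_div, one_div, inv_inv]; ring

theorem exists_sobolev_exponent (hd : 2 ≤ d) (hpq : p⁻¹ + q⁻¹ < 2 / (d : ℝ≥0∞)) :
    ∃ ρ : ℝ, p⁻¹ < ENNReal.ofReal (1 - ρ⁻¹) ∧ q⁻¹ < ENNReal.ofReal (ρ⁻¹ + 2 / d - 1) ∧
      ((1 - p⁻¹)⁻¹).toReal ≤ ρ := by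
  have hd0 : (0 : ℝ) < d := by positivity
  have hd2 : 2 / (d : ℝ) ≤ 1 := (div_le_one hd0).2 (by exact_mod_cast hd)
  rw [show (2 / (d : ℝ≥0∞)) = ENNReal.ofReal (2 / d) by simp [ENNReal.ofReal_div_of_pos hd0]] at hpq
  obtain ⟨hp, hq⟩ := ENNReal.add_ne_top.1 hpq.ne_top
  have hsum : p⁻¹.toReal + q⁻¹.toReal < 2 / d := by
    rw [← ENNReal.toReal_add hp hq]
    exact (ENNReal.lt_ofReal_iff_toReal_lt (ENNReal.add_ne_top.2 ⟨hp, hq⟩)).1 hpq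
  have hq0 : 0 ≤ q⁻¹.toReal := ENNReal.toReal_nonneg
  obtain ⟨r, hqr, hrp⟩ := exists_between
    (show 1 - 2 / (d : ℝ) + q⁻¹.toReal < 1 - p⁻¹.toReal by linarith)
  refine ⟨r⁻¹, ?_, ?_, ?_⟩
  · rw [inv_inv, ENNReal.lt_ofReal_iff_toReal_lt hp]; linarith
  · rw [inv_inv, ENNReal.lt_ofReal_iff_toReal_lt hq]; linarith
  · have hp1 : p⁻¹ ≤ 1 := (ENNReal.toReal_le_toReal hp ENNReal.one_ne_top).1 (by
      rw [ENNReal.toReal_one]; linarith)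
    rw [ENNReal.toReal_inv, ENNReal.toReal_sub_of_le hp1 ENNReal.one_ne_top, ENNReal.toReal_one]
    exact inv_anti₀ (by linarith) hrp.le

end Exponents

end RCM

open RCM in
theorem reverse_moser_iteration_superharmonic_general.{v} {d : ℕ} (hd : 2 ≤ d) {Creg Criso : ℝ}
    (hCreg : 0 < Creg) (hCriso : 0 < Criso) {p q : ℝ≥0∞} {ρ : ℝ}
    (hp : p⁻¹ < ENNReal.ofReal (1 - ρ⁻¹)) (hq : q⁻¹ < ENNReal.ofReal (ρ⁻¹ + 2 / d - 1)) :
    ∃ C κ : ℝ, 0 < C ∧ 0 < κ ∧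
      ∀ (V : Type v) (G : SimpleGraph V) (nbr : V → Finset V) (ω : V → V → ℝ)
        (ball : V → ℝ → Finset V), IsNetwork G nbr ω → IsBallFamily G ball →
        VolumeRegular ball d Creg → RelIsoperimetric G ball Criso →
        ∀ (x₀ : V) (n : ℝ), 1 ≤ n →
        ∀ u : V → ℝ, (∀ x, 0 < u x) → (∀ x ∈ ball x₀ n, lap nbr ω u x ≤ 0) →
        ∀ α β : ℝ, 0 < α → α ≤ β / 2 → β ≤ ρ / 2 →
        ∀ σ' σ : ℝ, 1 / 2 ≤ σ' → σ' < σ → σ ≤ 1 →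
          nrm (ball x₀ (σ' * n)) β u ≤
            (C * max 1 (nrmE (ball x₀ n) p (mu nbr ω) * nrmE (ball x₀ n) q (nu nbr ω)) /
                (σ - σ') ^ 2) ^ (κ * (1 / α - 1 / β)) *
              nrm (ball x₀ (σ * n)) α u := by
  obtain ⟨hρ, s, t, hs1, ht1, hsp, htq, hsρ, hexp⟩ := exists_finite_exponents hd hp hq
  have hs := Real.HolderConjugate.conjExponent hs1
  have ht := Real.HolderConjugate.conjExponent ht1
  have hχ : 1 < ρ / s.conjExponent := (one_lt_div hs.symm.pos).2
    ((inv_lt_inv₀ hρ hs.symm.pos).1 (by linarith [hs.inv_add_inv_eq_one]))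
  set χ := ρ / s.conjExponent
  set C₀ := stepConst d Creg (isoConst d Creg Criso) t.conjExponent ρ
  have hC₀ : 0 ≤ C₀ := stepConst_nonneg hCreg.le _ _ _
  refine ⟨(1 + C₀) * 4 ^ (1 + 1 / (χ - 1)), 2 * (ρ / (χ - 1) * χ), by positivity, by positivity, ?_⟩
  intro V G nbr ω ball hnet hball hreg hiso x₀ n hn u hu hsuper α β hα hαβ hβρ σ' σ hσ' hσσ hσ1
  rw [mul_right_comm]
  exact le_rpow_mul_of_exponent_step (Φ := fun b τ => nrm (ball x₀ (τ * n)) b u)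
    (fun b τ => nrm_nonneg _ b u) hρ hχ
    (one_le_mul_of_one_le_of_one_le (le_add_of_nonneg_right hC₀) (le_max_left _ _))
    (fun b hb hbρ τ' τ hτ' hττ hτ1 => hnet.nrm_ball_le_max hball hd hreg hCreg hiso hCriso hs ht
      hsp htq hρ hexp hn hu hsuper hb hbρ hτ' hττ hτ1)
    (fun a b ha hab => nrm_le_nrm_of_le (hball.nonempty x₀ (by nlinarith)) ha hab u)
    hα hαβ hβρ hσ' hσσ hσ1

open RCM in
/-- **Reverse Moser iteration for superharmonic functions.** -/
theorem reverse_moser_iteration_superharmonic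
    (d : ℕ) (hd : 2 ≤ d) (Creg Criso : ℝ) (hCreg : 0 < Creg) (hCriso : 0 < Criso)
    (p q : ℝ≥0∞) (hp : 1 < p) (hq : 1 < q) (hpq : p⁻¹ + q⁻¹ < 2 / (d : ℝ≥0∞)) :
    ∃ C₆ κ : ℝ, 0 < C₆ ∧ 0 < κ ∧
      ∀ (V : Type) (G : SimpleGraph V) (nbr : V → Finset V)
        (_ : ∀ x y, y ∈ nbr x ↔ G.Adj x y)
        (_ : Infinite V) (_ : G.Connected)
        (ball : V → ℝ → Finset V)
        (_ : ∀ (x : V) (r : ℝ) (y : V), y ∈ ball x r ↔ (G.dist x y : ℝ) ≤ r)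
        (_ : ∀ (x : V) (r : ℝ), 1 ≤ r →
              Creg⁻¹ * r ^ d ≤ ((ball x r).card : ℝ) ∧ ((ball x r).card : ℝ) ≤ Creg * r ^ d)
        (_ : ∀ (x : V) (r : ℝ) (A : Finset V), 1 ≤ r → A.Nonempty → A ⊆ ball x r →
              (A.card : ℝ) < ((ball x r).card : ℝ) / 2 →
              Criso / r ≤ ((RCM.relBdry G (ball x r) A).card : ℝ) / (A.card : ℝ))
        (ω : V → V → ℝ)
        (_ : ∀ x y, ω x y = ω y x)
        (_ : ∀ x y, G.Adj x y → 0 < ω x y)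
        (_ : ∀ x y, ¬ G.Adj x y → ω x y = 0)
        (x₀ : V) (n : ℝ) (_ : 1 ≤ n)
        (u : V → ℝ) (_ : ∀ x, 0 < u x)
        (_ : ∀ x ∈ ball x₀ n, lap nbr ω u x ≤ 0)
        (β : ℝ) (_ : 0 < β) (_ : β < ((1 - p⁻¹)⁻¹).toReal / 2)
        (α : ℝ) (_ : 0 < α) (_ : α < β / 2)
        (σ' σ : ℝ) (_ : 1 / 2 ≤ σ') (_ : σ' < σ) (_ : σ ≤ 1),
        nrm (ball x₀ (σ' * n)) β u ≤
          (C₆ * max 1 (nrmE (ball x₀ n) p (mu nbr ω) * nrmE (ball x₀ n) q (nu nbr ω)) /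
              (σ - σ') ^ 2) ^ (κ * (1 / α - 1 / β)) *
            nrm (ball x₀ (σ * n)) α u := by
  obtain ⟨ρ, hpρ, hqρ, hρ⟩ := exists_sobolev_exponent hd hpq
  obtain ⟨C, κ, hC, hκ, hmoser⟩ :=
    reverse_moser_iteration_superharmonic_general hd hCreg hCriso hpρ hqρ
  refine ⟨C, κ, hC, hκ, fun V G nbr hnbr _ _ ball hball hreg hiso ω hsymm hpos hzero x₀ n hn u hu
    hsuper β _ hβp α hα hαβ σ' σ hσ' hσσ hσ1 => ?_⟩
  exact hmoser V G nbr ω ball ⟨hnbr, hsymm, hpos, hzero⟩ hball hreg hiso x₀ n hn u hu hsuper α β hα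
    hαβ.le (by linarith) σ' σ hσ' hσσ hσ1
end
end

section
/- Hölder continuity of harmonic functions from the elliptic Harnack inequality: suppose s ≥ 1, C ≥ 1, x₀ ∈ V and R, R₀ with R₀ ≥ 2R and R ≥ s are such that for every r ∈ [s, R₀] and every v : V → [0,∞) harmonic on B(x₀,r) one has max_{B(x₀,r/2)} v ≤ C·min_{B(x₀,r/2)} v. Then there exists c < ∞ depending only on C such that for every u : V → (0,∞) harmonic on B(x₀,R₀) and all x₁, x₂ ∈ B(x₀,R): |u(x₁) − u(x₂)| ≤ c·(R/R₀)^θ·max_{B(x₀,R₀/2)} u, where θ := ln(2C/(2C−1))/ln 2. -/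
open Finset MeasureTheory
open scoped ENNReal

noncomputable section

/-!
The Harnack inequality contracts oscillation. If `u` is harmonic on a ball, subtract its minimum
over the ball of radius one larger: the nonnegative function obtained has maximum `S` and minimum
`I ≥ S / C` on the ball of half the radius, so the oscillation `S - I` of `u` there is at most
`(1 - 1 / C) S`, hence at most `1 - 1 / C` times the oscillation of `u` on the larger ball.
Because harmonicity at `x` involves the neighbours of `x`, one step takes the radius `ρ` to
`2ρ + 1`, i.e. it doubles `ρ + 1`. About `log₂ (R₀ / R)` steps separate `R` from `R₀ / 2`, and
`1 - 1 / C ≤ 2 ^ (-θ)` turns the resulting factor into a multiple of `(R / R₀) ^ θ`.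
-/

namespace RCM

theorem le_pow_mul_of_le_mul_two_mul_add_one {D : ℝ → ℝ} {q R T : ℝ} (hq : 0 ≤ q) (hR : -1 ≤ R)
    (hD : ∀ ρ, R ≤ ρ → 2 * ρ + 1 ≤ T → D ρ ≤ q * D (2 * ρ + 1)) (n : ℕ)
    (hT : 2 ^ n * (R + 1) - 1 ≤ T) : D R ≤ q ^ n * D (2 ^ n * (R + 1) - 1) := by
  induction n with
  | zero => simp
  | succ n ih =>
    set ρ := 2 ^ n * (R + 1) - 1 with hρ
    have hnext : 2 ^ (n + 1) * (R + 1) - 1 = 2 * ρ + 1 := by rw [hρ]; ring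
    have hRρ : R ≤ ρ := by
      have := le_mul_of_one_le_left (by linarith : 0 ≤ R + 1)
        (one_le_pow₀ one_le_two : (1 : ℝ) ≤ 2 ^ n)
      linarith
    rw [hnext] at hT ⊢
    calc D R ≤ q ^ n * D ρ := ih (by linarith)
      _ ≤ q ^ n * (q * D (2 * ρ + 1)) := by gcongr; exact hD ρ hRρ hT
      _ = q ^ (n + 1) * D (2 * ρ + 1) := by ring

theorem exists_two_pow_mul_add_one_near {R T : ℝ} (hR : 1 ≤ R) (hRT : R ≤ T) :
    ∃ n : ℕ, 2 ^ n * (R + 1) ≤ T + 1 ∧ ((2 : ℝ) ^ n)⁻¹ ≤ 4 * (R / T) := by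
  have hT : 0 < T := by linarith
  obtain ⟨n, hn, hn'⟩ := exists_nat_pow_near
    ((one_le_div (by linarith : 0 < R + 1)).2 (by linarith : R + 1 ≤ T + 1)) one_lt_two
  rw [le_div_iff₀ (by linarith)] at hn
  rw [div_lt_iff₀ (by linarith), pow_succ] at hn'
  refine ⟨n, hn, ?_⟩
  rw [inv_le_iff_one_le_mul₀ (by positivity), ← mul_div_assoc, div_mul_eq_mul_div, one_le_div hT]
  have hRn : 2 ^ n * (R + 1) ≤ 2 ^ n * (2 * R) := by gcongr; linarith
  linarith

theorem le_rpow_mul_of_le_two_rpow_neg_mul {D : ℝ → ℝ} (hmono : Monotone D) (hD₀ : ∀ r, 0 ≤ D r)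
    {R T θ : ℝ} (hθ : 0 ≤ θ) (hR : 1 ≤ R) (hRT : R ≤ T)
    (hD : ∀ ρ, R ≤ ρ → 2 * ρ + 1 ≤ T → D ρ ≤ 2 ^ (-θ) * D (2 * ρ + 1)) :
    D R ≤ (4 * (R / T)) ^ θ * D T := by
  have hT : 0 < T := by linarith
  obtain ⟨n, hn, hn'⟩ := exists_two_pow_mul_add_one_near hR hRT
  have hfactor : ((2 : ℝ) ^ (-θ)) ^ n = ((2 : ℝ) ^ n)⁻¹ ^ θ := by
    rw [Real.rpow_pow_comm zero_le_two, Real.rpow_neg_eq_inv_rpow]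
  calc D R ≤ ((2 : ℝ) ^ (-θ)) ^ n * D (2 ^ n * (R + 1) - 1) :=
        le_pow_mul_of_le_mul_two_mul_add_one (by positivity) (by linarith) hD n (by linarith)
    _ ≤ (4 * (R / T)) ^ θ * D T := by
        rw [hfactor]
        gcongr
        · exact hD₀ _
        · exact hmono (by linarith)

/-- The exponent `θ` of the Hölder estimate, chosen so that `2 ^ (-θ) = 1 - 1 / (2C)`. -/
def holderExponent (C : ℝ) : ℝ := Real.log (2 * C / (2 * C - 1)) / Real.log 2

theorem holderExponent_nonneg {C : ℝ} (hC : 1 / 2 < C) : 0 ≤ holderExponent C := by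
  have : 1 ≤ 2 * C / (2 * C - 1) := (one_le_div (by linarith)).2 (by linarith)
  exact div_nonneg (Real.log_nonneg this) (Real.log_nonneg one_le_two)

theorem two_rpow_neg_holderExponent {C : ℝ} (hC : 1 / 2 < C) :
    2 ^ (-holderExponent C) = (2 * C - 1) / (2 * C) := by
  have hq : 0 < 2 * C / (2 * C - 1) := div_pos (by linarith) (by linarith)
  rw [holderExponent, Real.log_div_log, Real.rpow_neg zero_le_two,
    Real.rpow_logb two_pos (by norm_num) hq, inv_div]

theorem one_sub_inv_le_two_rpow_neg_holderExponent {C : ℝ} (hC : 1 / 2 < C) :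
    1 - C⁻¹ ≤ 2 ^ (-holderExponent C) := by
  have hCinv : C⁻¹ * C = 1 := inv_mul_cancel₀ (by linarith)
  rw [two_rpow_neg_holderExponent hC, le_div_iff₀ (by linarith)]
  linarith

variable {V : Type*}

theorem diam_image_le_sSup_image {A : Finset V} {f : V → ℝ} (hf : ∀ x ∈ A, 0 ≤ f x) :
    Metric.diam (f '' (A : Set V)) ≤ sSup (f '' (A : Set V)) := by
  rw [Real.diam_eq (A.finite_toSet.image f).isBounded]
  exact sub_le_self _ (Real.sInf_nonneg (Set.forall_mem_image.2 hf))

theorem diam_image_le_of_sSup_le_mul_sInf {A : Finset V} {v : V → ℝ} {C : ℝ} (hC : 0 < C)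
    (h : sSup (v '' (A : Set V)) ≤ C * sInf (v '' (A : Set V))) :
    Metric.diam (v '' (A : Set V)) ≤ (1 - C⁻¹) * sSup (v '' (A : Set V)) := by
  have hinf : C⁻¹ * sSup (v '' (A : Set V)) ≤ sInf (v '' (A : Set V)) := (inv_mul_le_iff₀ hC).2 h
  rw [Real.diam_eq (A.finite_toSet.image v).isBounded]
  linarith

theorem diam_image_sub_const (f : V → ℝ) (a : ℝ) (A : Set V) :
    Metric.diam ((fun x => f x - a) '' A) = Metric.diam (f '' A) := by
  rw [← (IsometryEquiv.subRight a).isometry.diam_image (f '' A), Set.image_image]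
  rfl

variable {nbr : V → Finset V} {ω : V → V → ℝ}

/-- `u` is harmonic on `B`: `L_Y^ω u = 0` on `B`. -/
def Harmonic (nbr : V → Finset V) (ω : V → V → ℝ) (B : Finset V) (u : V → ℝ) : Prop :=
  ∀ x ∈ B, lap nbr ω u x = 0

/-- The elliptic Harnack inequality with constant `C`: `max_A v ≤ C min_A v` for all nonnegative
`v` that are harmonic on `B`. Here `A` stands for the ball of half the radius of `B`. -/
def EllipticHarnack (nbr : V → Finset V) (ω : V → V → ℝ) (C : ℝ) (A B : Finset V) : Prop :=
  ∀ v : V → ℝ, (∀ x, 0 ≤ v x) → Harmonic nbr ω B v →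
    sSup (v '' (A : Set V)) ≤ C * sInf (v '' (A : Set V))

theorem lap_congr {f g : V → ℝ} {x : V} (hx : f x = g x) (hnbr : ∀ y ∈ nbr x, f y = g y) :
    lap nbr ω f x = lap nbr ω g x := by
  unfold lap
  congr 1
  exact Finset.sum_congr rfl fun y hy => by rw [hx, hnbr y hy]

theorem lap_sub_const (f : V → ℝ) (a : ℝ) (x : V) :
    lap nbr ω (fun y => f y - a) x = lap nbr ω f x := by
  simp only [lap, sub_sub_sub_cancel_right]

theorem Harmonic.mono {A B : Finset V} {u : V → ℝ} (hu : Harmonic nbr ω B u) (hAB : A ⊆ B) :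
    Harmonic nbr ω A u :=
  fun x hx => hu x (hAB hx)

theorem Harmonic.max_sub_zero {B B' : Finset V} {u : V → ℝ} {m : ℝ} (hu : Harmonic nbr ω B u)
    (hB : B ⊆ B') (hnbr : ∀ x ∈ B, nbr x ⊆ B') (hm : ∀ x ∈ B', m ≤ u x) :
    Harmonic nbr ω B (fun x => max (u x - m) 0) := by
  have hmax : ∀ x ∈ B', max (u x - m) 0 = u x - m := fun x hx =>
    max_eq_left (sub_nonneg.2 (hm x hx))
  intro x hx
  rw [lap_congr (hmax x (hB hx)) fun y hy => hmax y (hnbr x hx hy), lap_sub_const, hu x hx]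

theorem EllipticHarnack.diam_image_le {C : ℝ} {A B B' : Finset V} (hC : 1 ≤ C)
    (hH : EllipticHarnack nbr ω C A B) (hA : A ⊆ B') (hB : B ⊆ B') (hnbr : ∀ x ∈ B, nbr x ⊆ B')
    {u : V → ℝ} (hu : Harmonic nbr ω B u) :
    Metric.diam (u '' (A : Set V)) ≤ (1 - C⁻¹) * Metric.diam (u '' (B' : Set V)) := by
  have hbdd : Bornology.IsBounded (u '' (B' : Set V)) := (B'.finite_toSet.image u).isBounded
  set m := sInf (u '' (B' : Set V))
  have hmu : ∀ x ∈ B', m ≤ u x := fun x hx => csInf_le hbdd.bddBelow ⟨x, hx, rfl⟩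
  set v : V → ℝ := fun x => max (u x - m) 0
  have hvu : ∀ x ∈ A, v x = u x - m := fun x hx => max_eq_left (sub_nonneg.2 (hmu x (hA hx)))
  have hharnack : sSup (v '' (A : Set V)) ≤ C * sInf (v '' (A : Set V)) :=
    hH v (fun _ => le_max_right _ _) (hu.max_sub_zero hB hnbr hmu)
  have hsup : sSup (v '' (A : Set V)) ≤ Metric.diam (u '' (B' : Set V)) := by
    refine Real.sSup_le (Set.forall_mem_image.2 fun x hx => ?_) Metric.diam_nonneg
    rw [hvu x hx, Real.diam_eq hbdd]
    exact sub_le_sub_right (le_csSup hbdd.bddAbove ⟨x, hA hx, rfl⟩) m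
  calc Metric.diam (u '' (A : Set V)) = Metric.diam (v '' (A : Set V)) := by
        rw [Set.image_congr hvu, diam_image_sub_const]
    _ ≤ (1 - C⁻¹) * sSup (v '' (A : Set V)) :=
        diam_image_le_of_sSup_le_mul_sInf (by linarith) hharnack
    _ ≤ (1 - C⁻¹) * Metric.diam (u '' (B' : Set V)) :=
        mul_le_mul_of_nonneg_left hsup (sub_nonneg.2 (inv_le_one_of_one_le₀ hC))

theorem neighbors_subset_ball_add_one {G : SimpleGraph V} (hnbr : ∀ x y, y ∈ nbr x ↔ G.Adj x y)
    {x₀ : V} {B : ℝ → Finset V} (hB : ∀ r y, y ∈ B r ↔ (G.dist x₀ y : ℝ) ≤ r) {r : ℝ} {x : V}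
    (hx : x ∈ B r) : nbr x ⊆ B (r + 1) := by
  intro y hy
  have hxy : G.Adj x y := (hnbr x y).1 hy
  have hdist : G.dist x₀ y ≤ G.dist x₀ x + 1 := by
    simpa only [SimpleGraph.dist_eq_one_iff_adj.2 hxy] using hxy.reachable.dist_triangle_right x₀
  rw [hB] at hx ⊢
  calc (G.dist x₀ y : ℝ) ≤ G.dist x₀ x + 1 := mod_cast hdist
    _ ≤ r + 1 := by gcongr

end RCM

open RCM in
/-- `B r` plays the role of the ball `B(x₀, r)`; `Metric.diam (u '' A)` is the oscillation of `u`
over `A`. -/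
theorem holder_continuity_harmonic_general {V : Type*} {nbr : V → Finset V} {ω : V → V → ℝ}
    {B : ℝ → Finset V} (hB : Monotone B) (hnbr : ∀ r, ∀ x ∈ B r, nbr x ⊆ B (r + 1))
    {C θ : ℝ} (hC : 1 ≤ C) (hθ : 0 ≤ θ) (hCθ : 1 - C⁻¹ ≤ 2 ^ (-θ))
    {R R₀ : ℝ} (hR : 1 ≤ R) (hRR₀ : 2 * R ≤ R₀)
    (hH : ∀ r ∈ Set.Icc (2 * R) (R₀ / 2), EllipticHarnack nbr ω C (B (r / 2)) (B r))
    {u : V → ℝ} (hu : Harmonic nbr ω (B (R₀ / 2)) u) :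
    ∀ x₁ ∈ B R, ∀ x₂ ∈ B R,
      |u x₁ - u x₂| ≤ 8 ^ θ * (R / R₀) ^ θ * Metric.diam (u '' (B (R₀ / 2) : Set V)) := by
  intro x₁ hx₁ x₂ hx₂
  have hbdd : ∀ r, Bornology.IsBounded (u '' (B r : Set V)) := fun r =>
    ((B r).finite_toSet.image u).isBounded
  have hmono : Monotone fun r => Metric.diam (u '' (B r : Set V)) := fun r r' hr =>
    Metric.diam_mono (Set.image_mono (Finset.coe_subset.2 (hB hr))) (hbdd r')
  have hstep : ∀ ρ, R ≤ ρ → 2 * ρ + 1 ≤ R₀ / 2 → Metric.diam (u '' (B ρ : Set V)) ≤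
      2 ^ (-θ) * Metric.diam (u '' (B (2 * ρ + 1) : Set V)) := by
    intro ρ hRρ hρ
    have hHρ : EllipticHarnack nbr ω C (B ρ) (B (2 * ρ)) := by
      simpa using hH (2 * ρ) ⟨by linarith, by linarith⟩
    refine (hHρ.diam_image_le hC (hB (by linarith)) (hB (by linarith)) (hnbr (2 * ρ))
      (hu.mono (hB (by linarith)))).trans ?_
    exact mul_le_mul_of_nonneg_right hCθ Metric.diam_nonneg
  calc |u x₁ - u x₂| ≤ Metric.diam (u '' (B R : Set V)) :=
        Metric.dist_le_diam_of_mem (hbdd R) ⟨x₁, hx₁, rfl⟩ ⟨x₂, hx₂, rfl⟩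
    _ ≤ (4 * (R / (R₀ / 2))) ^ θ * Metric.diam (u '' (B (R₀ / 2) : Set V)) :=
        le_rpow_mul_of_le_two_rpow_neg_mul hmono (fun _ => Metric.diam_nonneg) hθ hR
          (by linarith) hstep
    _ = 8 ^ θ * (R / R₀) ^ θ * Metric.diam (u '' (B (R₀ / 2) : Set V)) := by
        rw [← Real.mul_rpow (by norm_num) (div_nonneg (by linarith) (by linarith)),
          show 4 * (R / (R₀ / 2)) = 8 * (R / R₀) by ring]

open RCM in
/-- **Hölder continuity of harmonic functions from the elliptic Harnack inequality.** -/
theorem holder_continuity_harmonic (C : ℝ) (hC : 1 ≤ C) :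
    ∃ c : ℝ, 0 < c ∧
      ∀ (V : Type) (G : SimpleGraph V) (nbr : V → Finset V)
        (_ : ∀ x y, y ∈ nbr x ↔ G.Adj x y)
        (_ : Infinite V) (_ : G.Connected)
        (ball : V → ℝ → Finset V)
        (_ : ∀ (x : V) (r : ℝ) (y : V), y ∈ ball x r ↔ (G.dist x y : ℝ) ≤ r)
        (ω : V → V → ℝ)
        (_ : ∀ x y, ω x y = ω y x)
        (_ : ∀ x y, G.Adj x y → 0 < ω x y)
        (_ : ∀ x y, ¬ G.Adj x y → ω x y = 0)
        (x₀ : V) (s R R₀ : ℝ) (_ : 1 ≤ s) (_ : s ≤ R) (_ : 2 * R ≤ R₀)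
        (_ : ∀ r ∈ Set.Icc s R₀, ∀ v : V → ℝ, (∀ x, 0 ≤ v x) →
              (∀ x ∈ ball x₀ r, lap nbr ω v x = 0) →
              sSup (v '' (ball x₀ (r / 2) : Set V)) ≤
                C * sInf (v '' (ball x₀ (r / 2) : Set V)))
        (u : V → ℝ) (_ : ∀ x, 0 < u x)
        (_ : ∀ x ∈ ball x₀ R₀, lap nbr ω u x = 0),
        ∀ x₁ ∈ ball x₀ R, ∀ x₂ ∈ ball x₀ R,
          |u x₁ - u x₂| ≤
            c * (R / R₀) ^ (Real.log (2 * C / (2 * C - 1)) / Real.log 2) *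
              sSup (u '' (ball x₀ (R₀ / 2) : Set V)) := by
  refine ⟨8 ^ holderExponent C, by positivity, ?_⟩
  intro V G nbr hnbr _ _ ball hball ω _ _ _ x₀ s R R₀ hs hsR hRR₀ hH u hu₀ hu x₁ hx₁ x₂ hx₂
  have hmono : Monotone (ball x₀) := fun r r' hr x hx =>
    (hball x₀ r' x).2 (((hball x₀ r x).1 hx).trans hr)
  have hRR₀_nonneg : 0 ≤ R / R₀ := div_nonneg (by linarith) (by linarith)
  have hosc := holder_continuity_harmonic_general hmono
    (fun _ _ => neighbors_subset_ball_add_one hnbr (hball x₀)) hC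
    (holderExponent_nonneg (by linarith))
    (one_sub_inv_le_two_rpow_neg_holderExponent (by linarith)) (hs.trans hsR) hRR₀
    (fun r hr => hH r ⟨by linarith [hr.1], by linarith [hr.2]⟩)
    (fun x hx => hu x (hmono (by linarith) hx)) x₁ hx₁ x₂ hx₂
  exact hosc.trans (mul_le_mul_of_nonneg_left (diam_image_le_sSup_image fun x _ => (hu₀ x).le)
    (by positivity))
end
end

section
/- Parabolic energy estimates: let I = [s₁,s₂] ⊂ ℝ, let B ⊂ V be a finite connected set, let η : V → ℝ satisfy η = 0 outside B, 0 ≤ η ≤ 1 and η ≡ 0 on ∂B, and let ζ : ℝ → [0,1] be continuously differentiable with ζ = 0 outside I and ζ(s₁) = 0. Let u : I × V → (0,∞) be sub-caloric on I × B. Then for every α ≥ 1: (a) ∫_I ζ(t)·E^ω_{η²}(u(t,·)^α)/|B| dt ≤ 64·α²·(‖∇η‖²_{ℓ∞(E)} + sup_{t∈I}|ζ′(t)|)·∫_I ‖u(t,·)^{2α}‖_{1,B,μ^ω} dt; and (b) max_{t∈I} ζ(t)·‖(η·u(t,·)^α)²‖_{1,B,μ^ω} ≤ 64·α²·(‖∇η‖²_{ℓ∞(E)}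 + sup_{t∈I}|ζ′(t)|)·∫_I ‖u(t,·)^{2α}‖_{1,B,μ^ω} dt. -/
open Finset MeasureTheory
open scoped ENNReal

noncomputable section

/-!
Testing `∂ₜu ≤ L u` against `η² u ^ (2α - 1)` and summing by parts reduces everything to one
inequality on each edge `{x, y}`. There the product `(η²(y) u(y) ^ (2α - 1) - η²(x) u(x) ^ (2α - 1))
(u(y) - u(x))` splits into a diagonal part, which controls `(u(y) ^ α - u(x) ^ α)²`, and a part
carrying `η²(y) - η²(x)`, which Young's inequality absorbs at the cost of `(∇η)² u ^ (2α)`.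
This bounds the time derivative of `‖(η u ^ α)²‖` plus the energy by a multiple of `‖u ^ (2α)‖`;
multiplying by `ζ` and integrating from `s₁`, where `ζ` vanishes, gives both estimates at once.
-/

namespace RCM

section RealPowers

variable {a b α β p q : ℝ}

lemma rpow_two_mul (ha : 0 ≤ a) (α : ℝ) : a ^ (2 * α) = (a ^ α) ^ 2 := by
  rw [mul_comm]
  exact_mod_cast Real.rpow_mul_natCast ha α 2

lemma rpow_eq_rpow_sub_one_mul (ha : 0 ≤ a) (hα : α ≠ 0) : a ^ α = a ^ (α - 1) * a := by
  rw [← Real.rpow_add_one' ha (by rwa [sub_add_cancel]), sub_add_cancel]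

lemma rpow_two_mul_sub_one (ha : 0 ≤ a) (hα : 2 * α - 1 ≠ 0) :
    a ^ (2 * α - 1) = a ^ (α - 1) * a ^ α := by
  have hexp : α - 1 + α = 2 * α - 1 := by ring
  rw [← Real.rpow_add' ha (by rwa [hexp]), hexp]

lemma rpow_sub_rpow_le_mul_sub (ha : 0 ≤ a) (hb : 0 < b) (hα : 1 ≤ α) :
    b ^ α - a ^ α ≤ α * b ^ (α - 1) * (b - a) := by
  have hbernoulli : 1 + α * (a / b - 1) ≤ (a / b) ^ α := by
    simpa using one_add_mul_self_le_rpow_one_add (s := a / b - 1)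
      (by linarith [div_nonneg ha hb.le]) hα
  rw [Real.div_rpow ha hb.le, le_div_iff₀ (Real.rpow_pos_of_pos hb α),
    rpow_eq_rpow_sub_one_mul hb.le (by grind)] at hbernoulli
  have hcancel : (1 + α * (a / b - 1)) * (b ^ (α - 1) * b) =
      b ^ (α - 1) * b - α * b ^ (α - 1) * (b - a) := by
    field_simp
    ring
  rw [rpow_eq_rpow_sub_one_mul hb.le (by grind)]
  linarith

lemma sq_rpow_sub_rpow_le (ha : 0 ≤ a) (hb : 0 ≤ b) (hα : 1 ≤ α) :
    (b ^ α - a ^ α) ^ 2 ≤ α * ((b ^ (2 * α - 1) - a ^ (2 * α - 1)) * (b - a)) := by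
  wlog hab : a < b generalizing a b
  · rcases (not_lt.1 hab).eq_or_lt with rfl | hba
    · simp
    · linarith [this hb ha hba]
  have hmono : a ^ (α - 1) ≤ b ^ (α - 1) := Real.rpow_le_rpow ha hab.le (by linarith)
  have hdiff : 0 ≤ b ^ α - a ^ α :=
    sub_nonneg.2 (Real.rpow_le_rpow ha hab.le (by linarith))
  have hpow : b ^ (α - 1) * (b ^ α - a ^ α) ≤ b ^ (2 * α - 1) - a ^ (2 * α - 1) := by
    rw [rpow_two_mul_sub_one ha (by grind), rpow_two_mul_sub_one hb (by grind)]
    linarith [mul_le_mul_of_nonneg_right hmono (Real.rpow_nonneg ha α)]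
  calc (b ^ α - a ^ α) ^ 2
      ≤ α * b ^ (α - 1) * (b - a) * (b ^ α - a ^ α) := by
        rw [sq]
        exact mul_le_mul_of_nonneg_right
          (rpow_sub_rpow_le_mul_sub ha (ha.trans_lt hab) hα) hdiff
    _ = α * (b ^ (α - 1) * (b ^ α - a ^ α) * (b - a)) := by ring
    _ ≤ α * ((b ^ (2 * α - 1) - a ^ (2 * α - 1)) * (b - a)) := by
        have : 0 ≤ b - a := sub_nonneg.2 hab.le
        gcongr

-- For `a ≤ b` the two sides differ by `a * b * (b ^ (β - 2) - a ^ (β - 2))`.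
lemma add_rpow_sub_one_mul_abs_sub_le (ha : 0 ≤ a) (hb : 0 ≤ b) (hβ : 2 ≤ β) :
    (a ^ (β - 1) + b ^ (β - 1)) * |b - a| ≤ |b ^ β - a ^ β| := by
  wlog hab : a ≤ b generalizing a b
  · rw [abs_sub_comm, abs_sub_comm (b ^ β), add_comm]
    exact this hb ha (le_of_not_ge hab)
  have hcross : a ^ (β - 1) * b ≤ b ^ (β - 1) * a := by
    have hmono : a ^ (β - 1 - 1) ≤ b ^ (β - 1 - 1) := Real.rpow_le_rpow ha hab (by linarith)
    rw [rpow_eq_rpow_sub_one_mul ha (by grind), rpow_eq_rpow_sub_one_mul hb (by grind)]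
    linarith [mul_le_mul_of_nonneg_right hmono (mul_nonneg ha hb)]
  rw [abs_of_nonneg (sub_nonneg.2 hab)]
  refine le_trans ?_ (le_abs_self _)
  rw [rpow_eq_rpow_sub_one_mul ha (by grind : β ≠ 0),
    rpow_eq_rpow_sub_one_mul hb (by grind : β ≠ 0)]
  linarith

lemma neg_two_mul_sq_sub_sq_mul_le {s t Q : ℝ} (hα : 0 ≤ α) (hQ : |Q| ≤ |t ^ 2 - s ^ 2|) :
    -(2 * α * ((q ^ 2 - p ^ 2) * Q)) ≤
      (p ^ 2 + q ^ 2) * (t - s) ^ 2 + 4 * α ^ 2 * (q - p) ^ 2 * (s ^ 2 + t ^ 2) := by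
  calc -(2 * α * ((q ^ 2 - p ^ 2) * Q))
      ≤ 2 * α * (|q ^ 2 - p ^ 2| * |Q|) := by
        rw [← abs_mul, ← mul_neg]
        gcongr
        exact neg_le_abs _
    _ ≤ 2 * α * (|q ^ 2 - p ^ 2| * |t ^ 2 - s ^ 2|) := by gcongr
    _ = 2 * |(q + p) * (t - s)| * (α * |(q - p) * (t + s)|) := by
        simp only [sq_sub_sq, abs_mul]
        ring
    _ ≤ ((q + p) * (t - s)) ^ 2 / 2 + 2 * α ^ 2 * ((q - p) * (t + s)) ^ 2 := by
        rw [← sq_abs ((q + p) * _), ← sq_abs ((q - p) * _)]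
        linarith [sq_nonneg (|(q + p) * (t - s)| - 2 * (α * |(q - p) * (t + s)|))]
    _ ≤ (p ^ 2 + q ^ 2) * (t - s) ^ 2 + 4 * α ^ 2 * (q - p) ^ 2 * (s ^ 2 + t ^ 2) := by
        linarith [sq_nonneg ((q - p) * (t - s)), sq_nonneg (α * ((q - p) * (t - s)))]

lemma edge_energy_le (ha : 0 ≤ a) (hb : 0 ≤ b) (hα : 1 ≤ α) (p q : ℝ) :
    (p ^ 2 + q ^ 2) * (b ^ α - a ^ α) ^ 2 ≤
      4 * α * ((q ^ 2 * b ^ (2 * α - 1) - p ^ 2 * a ^ (2 * α - 1)) * (b - a)) +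
        4 * α ^ 2 * (q - p) ^ 2 * (a ^ (2 * α) + b ^ (2 * α)) := by
  set A := a ^ (2 * α - 1)
  set B := b ^ (2 * α - 1)
  have hdiag : 2 * (p ^ 2 + q ^ 2) * (b ^ α - a ^ α) ^ 2 ≤
      2 * (p ^ 2 + q ^ 2) * (α * ((B - A) * (b - a))) := by
    gcongr
    exact sq_rpow_sub_rpow_le ha hb hα
  have hmean : |(A + B) * (b - a)| ≤ |(b ^ α) ^ 2 - (a ^ α) ^ 2| := by
    rw [abs_mul, abs_of_nonneg (by positivity : 0 ≤ A + B), ← rpow_two_mul ha, ← rpow_two_mul hb]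
    exact add_rpow_sub_one_mul_abs_sub_le ha hb (by linarith)
  have hcross := neg_two_mul_sq_sub_sq_mul_le (p := p) (q := q) (zero_le_one.trans hα) hmean
  rw [rpow_two_mul ha, rpow_two_mul hb]
  -- `q²B - p²A = ((p² + q²)(B - A) + (q² - p²)(A + B)) / 2`
  linarith

end RealPowers

section WeightedNorms

variable {V : Type*} {A : Finset V} {p : ℝ} {φ f g : V → ℝ}

lemma nrmW_one (A : Finset V) (φ f : V → ℝ) :
    nrmW A 1 φ f = (A.card : ℝ)⁻¹ * ∑ x ∈ A, |f x| * φ x := by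
  simp [nrmW]

lemma nrmW_nonneg (hφ : ∀ x ∈ A, 0 ≤ φ x) : 0 ≤ nrmW A p φ f :=
  Real.rpow_nonneg (mul_nonneg (by positivity) <| Finset.sum_nonneg fun x hx ↦
    mul_nonneg (by positivity) (hφ x hx)) _

lemma nrmW_mono (hp : 0 ≤ p) (hφ : ∀ x ∈ A, 0 ≤ φ x) (hfg : ∀ x ∈ A, |f x| ≤ |g x|) :
    nrmW A p φ f ≤ nrmW A p φ g := by
  refine Real.rpow_le_rpow (mul_nonneg (by positivity) <| Finset.sum_nonneg fun x hx ↦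
    mul_nonneg (by positivity) (hφ x hx)) ?_ (by positivity)
  gcongr ?_ * ∑ x ∈ A, ?_ with x hx
  exact mul_le_mul_of_nonneg_right (Real.rpow_le_rpow (abs_nonneg _) (hfg x hx) hp) (hφ x hx)

lemma continuousOn_nrmW {T : Type*} [TopologicalSpace T] {I : Set T} {v : T → V → ℝ}
    (hp : 0 ≤ p) (hv : ∀ x ∈ A, ContinuousOn (fun t ↦ v t x) I) :
    ContinuousOn (fun t ↦ nrmW A p φ (v t)) I :=
  (continuousOn_const.mul <| continuousOn_finsetSum _ fun x hx ↦
    ((hv x hx).abs.rpow_const fun _ _ ↦ Or.inr hp).mul continuousOn_const).rpow_const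
      fun _ _ ↦ Or.inr (by positivity)

end WeightedNorms

section Weights

variable {V : Type*} {G : SimpleGraph V} {nbr : V → Finset V} {ω : V → V → ℝ} {B : Finset V}
  {η : V → ℝ}

lemma weight_nonneg (hpos : ∀ x y, G.Adj x y → 0 < ω x y)
    (hzero : ∀ x y, ¬ G.Adj x y → ω x y = 0) (x y : V) : 0 ≤ ω x y := by
  by_cases h : G.Adj x y
  · exact (hpos x y h).le
  · exact (hzero x y h).ge

lemma mu_nonneg (hω : ∀ x y, 0 ≤ ω x y) (x : V) : 0 ≤ mu nbr ω x :=
  Finset.sum_nonneg fun y _ ↦ hω x y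

lemma sum_weight_le_mu (hω : ∀ x y, 0 ≤ ω x y) (hnbr : ∀ x, ∀ y ∉ nbr x, ω x y = 0)
    (B : Finset V) (x : V) : ∑ y ∈ B, ω x y ≤ mu nbr ω x := by
  rw [mu, ← tsum_eq_sum (L := .unconditional V) (hnbr x)]
  exact (summable_of_ne_finset_zero (hnbr x)).sum_le_tsum B fun y _ ↦ hω x y

lemma abs_sub_le_gradSup {C : ℝ} (hη : ∀ x, |η x| ≤ C) {x y : V} (h : G.Adj x y) :
    |η y - η x| ≤ gradSup G η := by
  refine le_csSup ⟨C + C, ?_⟩ ⟨x, y, h, rfl⟩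
  rintro _ ⟨x, y, -, rfl⟩
  exact (abs_sub _ _).trans (add_le_add (hη y) (hη x))

lemma eq_zero_or_weight_eq_zero_of_notMem (hzero : ∀ x y, ¬ G.Adj x y → ω x y = 0)
    (hηsupp : ∀ x ∉ B, η x = 0) (hηbdry : ∀ x ∈ intBdry G B, η x = 0) (x : V) {y : V}
    (hy : y ∉ B) : η x = 0 ∨ ω x y = 0 := by
  by_cases hx : x ∈ B
  · by_cases hadj : G.Adj x y
    · exact Or.inl (hηbdry x (by simpa [intBdry, hx] using ⟨y, hy, hadj⟩))
    · exact Or.inr (hzero x y hadj)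
  · exact Or.inl (hηsupp x hx)

lemma energySq_nonneg (hω : ∀ x y, 0 ≤ ω x y) (f : V → ℝ) : 0 ≤ energySq ω η f :=
  mul_nonneg (by norm_num) <| tsum_nonneg fun x ↦ tsum_nonneg fun y ↦
    mul_nonneg (mul_nonneg (sq_nonneg _) (hω x y)) (sq_nonneg _)

lemma energySq_eq_sum (hηsupp : ∀ x ∉ B, η x = 0)
    (hηω : ∀ x, ∀ y ∉ B, η x = 0 ∨ ω x y = 0) (f : V → ℝ) :
    energySq ω η f = 1 / 2 * ∑ x ∈ B, ∑ y ∈ B, η x ^ 2 * ω x y * (f y - f x) ^ 2 := by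
  rw [energySq, tsum_eq_sum (s := B) fun x hx ↦ by simp [hηsupp x hx]]
  congr 1
  refine Finset.sum_congr rfl fun x _ ↦ tsum_eq_sum fun y hy ↦ ?_
  rcases hηω x y hy with h | h <;> simp [h]

lemma continuousOn_energySq {T : Type*} [TopologicalSpace T] {I : Set T} {v : T → V → ℝ}
    (hηsupp : ∀ x ∉ B, η x = 0) (hηω : ∀ x, ∀ y ∉ B, η x = 0 ∨ ω x y = 0)
    (hv : ∀ x ∈ B, ContinuousOn (fun t ↦ v t x) I) :
    ContinuousOn (fun t ↦ energySq ω η (v t)) I := by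
  simp only [energySq_eq_sum hηsupp hηω]
  exact continuousOn_const.mul <| continuousOn_finsetSum _ fun x hx ↦
    continuousOn_finsetSum _ fun y hy ↦ continuousOn_const.mul (((hv y hy).sub (hv x hx)).pow 2)

lemma mu_mul_lap (hω : ∀ x y, 0 ≤ ω x y) (f : V → ℝ) (x : V) :
    mu nbr ω x * lap nbr ω f x = ∑ y ∈ nbr x, ω x y * (f y - f x) := by
  by_cases h : mu nbr ω x = 0
  · have hω0 := (Finset.sum_eq_zero_iff_of_nonneg fun y _ ↦ hω x y).1 h
    rw [h, zero_mul, Finset.sum_eq_zero fun y hy ↦ by rw [hω0 y hy, zero_mul]]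
  · rw [lap, mul_inv_cancel_left₀ h]

lemma sum_mul_mu_mul_lap (hω : ∀ x y, 0 ≤ ω x y) (hnbr : ∀ x, ∀ y ∉ nbr x, ω x y = 0)
    {φ : V → ℝ} (hφω : ∀ x, ∀ y ∉ B, φ x = 0 ∨ ω x y = 0) (f : V → ℝ) :
    ∑ x ∈ B, φ x * (mu nbr ω x * lap nbr ω f x) =
      ∑ x ∈ B, ∑ y ∈ B, φ x * ω x y * (f y - f x) := by
  refine Finset.sum_congr rfl fun x _ ↦ ?_
  simp only [mu_mul_lap hω, Finset.mul_sum, ← mul_assoc]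
  rw [← tsum_eq_sum (L := .unconditional V) fun y hy ↦ by rw [hnbr x y hy, mul_zero, zero_mul],
    tsum_eq_sum fun y hy ↦ by rw [mul_eq_zero.2 (hφω x y hy), zero_mul]]

lemma sum_sum_le_sum_sum_of_add_swap_le {k l : V → V → ℝ}
    (hkl : ∀ x ∈ B, ∀ y ∈ B, k x y + k y x ≤ l x y + l y x) :
    ∑ x ∈ B, ∑ y ∈ B, k x y ≤ ∑ x ∈ B, ∑ y ∈ B, l x y := by
  have hsum := Finset.sum_le_sum fun x hx ↦ Finset.sum_le_sum (hkl x hx)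
  simp only [Finset.sum_add_distrib] at hsum
  rw [Finset.sum_comm (f := fun x y ↦ k y x), Finset.sum_comm (f := fun x y ↦ l y x)] at hsum
  linarith

end Weights

section EnergyEstimate

variable {V : Type*} {nbr : V → Finset V} {ω : V → V → ℝ} {B : Finset V} {η : V → ℝ} {Γ α : ℝ}

lemma energySq_add_sum_mul_lap_le (hω : ∀ x y, 0 ≤ ω x y) (hsymm : ∀ x y, ω x y = ω y x)
    (hnbr : ∀ x, ∀ y ∉ nbr x, ω x y = 0) (hηsupp : ∀ x ∉ B, η x = 0)
    (hηω : ∀ x, ∀ y ∉ B, η x = 0 ∨ ω x y = 0) (hΓ : ∀ x y, ω x y ≠ 0 → |η y - η x| ≤ Γ)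
    (hα : 1 ≤ α) {w : V → ℝ} (hw : ∀ x ∈ B, 0 ≤ w x) :
    energySq ω η (fun x ↦ w x ^ α) +
        ∑ x ∈ B, η x ^ 2 * (2 * α * w x ^ (2 * α - 1)) * (mu nbr ω x * lap nbr ω w x) ≤
      2 * α ^ 2 * Γ ^ 2 * ∑ x ∈ B, w x ^ (2 * α) * mu nbr ω x := by
  have htest : ∀ x, ∀ y ∉ B, η x ^ 2 * (2 * α * w x ^ (2 * α - 1)) = 0 ∨ ω x y = 0 :=
    fun x y hy ↦ (hηω x y hy).imp_left fun h ↦ by simp [h]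
  have hedge : ∀ x ∈ B, ∀ y ∈ B,
      ω x y * ((η x ^ 2 + η y ^ 2) * (w y ^ α - w x ^ α) ^ 2 -
        4 * α * ((η y ^ 2 * w y ^ (2 * α - 1) - η x ^ 2 * w x ^ (2 * α - 1)) * (w y - w x))) ≤
      ω x y * (4 * α ^ 2 * Γ ^ 2 * (w x ^ (2 * α) + w y ^ (2 * α))) := by
    intro x hx y hy
    rcases eq_or_ne (ω x y) 0 with h | h
    · simp [h]
    have hgrad : (η y - η x) ^ 2 ≤ Γ ^ 2 := sq_le_sq.2 ((hΓ x y h).trans (le_abs_self Γ))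
    have hsum : 0 ≤ w x ^ (2 * α) + w y ^ (2 * α) :=
      add_nonneg (Real.rpow_nonneg (hw x hx) _) (Real.rpow_nonneg (hw y hy) _)
    refine mul_le_mul_of_nonneg_left (sub_le_iff_le_add'.2 ?_) (hω x y)
    exact (edge_energy_le (hw x hx) (hw y hy) hα (η x) (η y)).trans (by gcongr)
  calc _ = ∑ x ∈ B, ∑ y ∈ B, (1 / 2 * (η x ^ 2 * ω x y * (w y ^ α - w x ^ α) ^ 2) +
          η x ^ 2 * (2 * α * w x ^ (2 * α - 1)) * ω x y * (w y - w x)) := by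
        rw [energySq_eq_sum hηsupp hηω, sum_mul_mu_mul_lap hω hnbr htest]
        simp only [Finset.sum_add_distrib, Finset.mul_sum]
    _ ≤ ∑ x ∈ B, ∑ y ∈ B, 2 * α ^ 2 * Γ ^ 2 * (w x ^ (2 * α) * ω x y) := by
        refine sum_sum_le_sum_sum_of_add_swap_le fun x hx y hy ↦ ?_
        rw [hsymm y x]
        linarith [hedge x hx y hy]
    _ ≤ _ := by
        simp only [← Finset.mul_sum]
        gcongr with x hx
        exacts [Real.rpow_nonneg (hw x hx) _, sum_weight_le_mu hω hnbr B x]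

end EnergyEstimate

lemma mul_add_integral_mul_le_of_hasDerivAt {a b c t Z : ℝ} {ζ M E N : ℝ → ℝ}
    (hζ : ∀ r ∈ Set.Icc a b, DifferentiableAt ℝ ζ r) (hZ : ∀ r ∈ Set.Icc a b, |deriv ζ r| ≤ Z)
    (hζ01 : ∀ r ∈ Set.Icc a b, ζ r ∈ Set.Icc 0 1) (hζa : ζ a = 0) (hc : 0 ≤ c)
    (hM : ∀ r ∈ Set.Icc a b, ∃ D, HasDerivAt M D r ∧ D + E r ≤ c * N r)
    (hM0 : ∀ r ∈ Set.Icc a b, 0 ≤ M r) (hMN : ∀ r ∈ Set.Icc a b, M r ≤ N r)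
    (hE : ContinuousOn E (Set.Icc a b)) (hN : ContinuousOn N (Set.Icc a b))
    (ht : t ∈ Set.Icc a b) :
    ζ t * M t + ∫ r in a..t, ζ r * E r ≤ (c + Z) * ∫ r in a..t, N r := by
  have hsub : Set.Icc a t ⊆ Set.Icc a b := Set.Icc_subset_Icc_right ht.2
  choose! D hD hDle using hM
  have hderiv : ∀ r ∈ Set.Icc a b,
      HasDerivAt (fun r ↦ ζ r * M r) (deriv ζ r * M r + ζ r * D r) r :=
    fun r hr ↦ (hζ r hr).hasDerivAt.mul (hD r hr)
  have hle : ∀ r ∈ Set.Icc a b,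
      deriv ζ r * M r + ζ r * D r ≤ (c + Z) * N r - ζ r * E r := by
    intro r hr
    have hcut : deriv ζ r * M r ≤ Z * N r :=
      mul_le_mul (le_of_abs_le (hZ r hr)) (hMN r hr) (hM0 r hr) ((abs_nonneg _).trans (hZ r hr))
    have henergy := mul_le_mul_of_nonneg_left (hDle r hr) (hζ01 r hr).1
    have hone := mul_le_of_le_one_left
      (mul_nonneg hc ((hM0 r hr).trans (hMN r hr))) (hζ01 r hr).2
    linarith
  have hNint : IntervalIntegrable N volume a t := (hN.mono hsub).intervalIntegrable_of_Icc ht.1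
  have hζE : ContinuousOn (fun r ↦ ζ r * E r) (Set.Icc a t) :=
    (ContinuousOn.mul (fun r hr ↦ (hζ r hr).continuousAt.continuousWithinAt) hE).mono hsub
  have hftc := intervalIntegral.sub_le_integral_of_hasDeriv_right_of_le ht.1
    (φ := fun r ↦ (c + Z) * N r - ζ r * E r)
    (fun r hr ↦ (hderiv r (hsub hr)).continuousAt.continuousWithinAt)
    (fun r hr ↦ (hderiv r (hsub (Set.Ioo_subset_Icc_self hr))).hasDerivWithinAt)
    ((continuousOn_const.mul (hN.mono hsub)).sub hζE).integrableOn_Icc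
    (fun r hr ↦ hle r (hsub (Set.Ioo_subset_Icc_self hr)))
  rw [intervalIntegral.integral_sub (hNint.const_mul _) (hζE.intervalIntegrable_of_Icc ht.1),
    intervalIntegral.integral_const_mul, hζa, zero_mul] at hftc
  linarith

lemma integral_le_and_forall_le_of_add_integral_le {a b K : ℝ} {f g h : ℝ → ℝ} (hab : a ≤ b)
    (hf : ∀ t ∈ Set.Icc a b, 0 ≤ f t) (hg : ∀ t ∈ Set.Icc a b, 0 ≤ g t)
    (hh : ∀ t ∈ Set.Icc a b, 0 ≤ h t) (hK : 0 ≤ K) (hint : IntervalIntegrable h volume a b)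
    (hfgh : ∀ t ∈ Set.Icc a b, f t + ∫ r in a..t, g r ≤ K * ∫ r in a..t, h r) :
    (∫ r in a..b, g r ≤ K * ∫ r in a..b, h r) ∧
      ∀ t ∈ Set.Icc a b, f t ≤ K * ∫ r in a..b, h r := by
  have hb := Set.right_mem_Icc.2 hab
  refine ⟨by linarith [hfgh b hb, hf b hb], fun t ht ↦ ?_⟩
  have hgint : 0 ≤ ∫ r in a..t, g r :=
    intervalIntegral.integral_nonneg ht.1 fun r hr ↦ hg r ⟨hr.1, hr.2.trans ht.2⟩
  have hmono : ∫ r in a..t, h r ≤ ∫ r in a..b, h r :=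
    intervalIntegral.integral_mono_interval le_rfl ht.1 ht.2
      (ae_restrict_of_forall_mem measurableSet_Ioc fun r hr ↦ hh r ⟨hr.1.le, hr.2⟩) hint
  linarith [hfgh t ht, mul_le_mul_of_nonneg_left hmono hK]

namespace SubCaloric

variable {V : Type*} {nbr : V → Finset V} {ω : V → V → ℝ} {B : Finset V} {η : V → ℝ} {Γ α t : ℝ}
  {I : Set ℝ} {u : ℝ → V → ℝ}

lemma continuousOn_rpow (hu : SubCaloric nbr ω I B u) (hα : 0 ≤ α) {x : V} (hx : x ∈ B) :
    ContinuousOn (fun t ↦ u t x ^ α) I :=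
  ContinuousOn.rpow_const (fun t ht ↦
    have ⟨_, hd, _⟩ := hu x hx t ht
    hd.continuousAt.continuousWithinAt) fun _ _ ↦ Or.inr hα

lemma exists_hasDerivAt_nrmW_add_energySq_le (hu : SubCaloric nbr ω I B u)
    (hω : ∀ x y, 0 ≤ ω x y) (hsymm : ∀ x y, ω x y = ω y x)
    (hnbr : ∀ x, ∀ y ∉ nbr x, ω x y = 0) (hηsupp : ∀ x ∉ B, η x = 0)
    (hηω : ∀ x, ∀ y ∉ B, η x = 0 ∨ ω x y = 0) (hΓ : ∀ x y, ω x y ≠ 0 → |η y - η x| ≤ Γ)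
    (hα : 1 ≤ α) (ht : t ∈ I) (hpos : ∀ x ∈ B, 0 ≤ u t x) :
    ∃ D, HasDerivAt (fun s ↦ nrmW B 1 (mu nbr ω) fun x ↦ (η x * u s x ^ α) ^ 2) D t ∧
      D + energySq ω η (fun x ↦ u t x ^ α) / B.card ≤
        2 * α ^ 2 * Γ ^ 2 * nrmW B 1 (mu nbr ω) fun x ↦ u t x ^ (2 * α) := by
  choose! d hd hdle using fun x (hx : x ∈ B) ↦ hu x hx t ht
  refine ⟨(B.card : ℝ)⁻¹ *
    ∑ x ∈ B, η x ^ 2 * (2 * α * u t x ^ (2 * α - 1)) * (mu nbr ω x * d x), ?_, ?_⟩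
  · simp only [nrmW_one, abs_sq]
    refine (HasDerivAt.fun_sum fun x hx ↦ ?_).const_mul _
    refine (((((hd x hx).rpow_const (Or.inr hα)).const_mul (η x)).fun_pow 2).mul_const
      (mu nbr ω x)).congr_deriv ?_
    rw [rpow_two_mul_sub_one (hpos x hx) (by grind)]
    ring
  · have hlap : ∑ x ∈ B, η x ^ 2 * (2 * α * u t x ^ (2 * α - 1)) * (mu nbr ω x * d x) ≤
        ∑ x ∈ B, η x ^ 2 * (2 * α * u t x ^ (2 * α - 1)) *
          (mu nbr ω x * lap nbr ω (u t) x) := by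
      gcongr with x hx
      · have := Real.rpow_nonneg (hpos x hx) (2 * α - 1)
        positivity
      · exact mu_nonneg hω x
      · exact hdle x hx
    have henergy := energySq_add_sum_mul_lap_le hω hsymm hnbr hηsupp hηω hΓ hα hpos
    have habs : ∑ x ∈ B, |u t x ^ (2 * α)| * mu nbr ω x =
        ∑ x ∈ B, u t x ^ (2 * α) * mu nbr ω x :=
      Finset.sum_congr rfl fun x hx ↦ by rw [abs_of_nonneg (Real.rpow_nonneg (hpos x hx) _)]
    rw [nrmW_one, habs, div_eq_inv_mul, ← mul_add, mul_left_comm]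
    gcongr
    linarith

lemma nrmW_add_integral_energySq_le {s₁ s₂ Z : ℝ} {ζ : ℝ → ℝ}
    (hu : SubCaloric nbr ω (Set.Icc s₁ s₂) B u) (hω : ∀ x y, 0 ≤ ω x y)
    (hsymm : ∀ x y, ω x y = ω y x) (hnbr : ∀ x, ∀ y ∉ nbr x, ω x y = 0)
    (hηsupp : ∀ x ∉ B, η x = 0) (hη : ∀ x, |η x| ≤ 1)
    (hηω : ∀ x, ∀ y ∉ B, η x = 0 ∨ ω x y = 0) (hΓ : ∀ x y, ω x y ≠ 0 → |η y - η x| ≤ Γ)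
    (hζ : ∀ t ∈ Set.Icc s₁ s₂, DifferentiableAt ℝ ζ t)
    (hZ : ∀ t ∈ Set.Icc s₁ s₂, |deriv ζ t| ≤ Z)
    (hζ01 : ∀ t ∈ Set.Icc s₁ s₂, ζ t ∈ Set.Icc 0 1) (hζs₁ : ζ s₁ = 0)
    (hpos : ∀ t ∈ Set.Icc s₁ s₂, ∀ x ∈ B, 0 ≤ u t x) (hα : 1 ≤ α) (ht : t ∈ Set.Icc s₁ s₂) :
    ζ t * nrmW B 1 (mu nbr ω) (fun x ↦ (η x * u t x ^ α) ^ 2) +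
        ∫ r in s₁..t, ζ r * (energySq ω η (fun x ↦ u r x ^ α) / B.card) ≤
      (2 * α ^ 2 * Γ ^ 2 + Z) *
        ∫ r in s₁..t, nrmW B 1 (mu nbr ω) fun x ↦ u r x ^ (2 * α) := by
  refine mul_add_integral_mul_le_of_hasDerivAt
    (M := fun r ↦ nrmW B 1 (mu nbr ω) fun x ↦ (η x * u r x ^ α) ^ 2)
    hζ hZ hζ01 hζs₁ (by positivity)
    (fun r hr ↦ hu.exists_hasDerivAt_nrmW_add_energySq_le hω hsymm hnbr hηsupp hηω hΓ hα hr
      (hpos r hr))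
    (fun r _ ↦ nrmW_nonneg fun x _ ↦ mu_nonneg hω x)
    (fun r hr ↦ nrmW_mono zero_le_one (fun x _ ↦ mu_nonneg hω x) fun x hx ↦ ?_)
    ((continuousOn_energySq hηsupp hηω fun x hx ↦
      hu.continuousOn_rpow (by linarith) hx).div_const _)
    (continuousOn_nrmW zero_le_one fun x hx ↦ hu.continuousOn_rpow (by linarith) hx) ht
  rw [rpow_two_mul (hpos r hr x hx), mul_pow, abs_mul]
  exact mul_le_of_le_one_left (abs_nonneg _)
    (by simpa using pow_le_one₀ (n := 2) (abs_nonneg _) (hη x))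

end SubCaloric

end RCM

open RCM in
theorem parabolic_energy_estimates_general
    {V : Type*} (G : SimpleGraph V) (nbr : V → Finset V)
    (hnbr : ∀ x y, y ∈ nbr x ↔ G.Adj x y)
    (ω : V → V → ℝ)
    (hsymm : ∀ x y, ω x y = ω y x)
    (hω : ∀ x y, 0 ≤ ω x y)
    (hzero : ∀ x y, ¬ G.Adj x y → ω x y = 0)
    (s₁ s₂ : ℝ) (hs : s₁ ≤ s₂)
    (B : Finset V) (_hB : B.Nonempty)
    (η : V → ℝ)
    (hηsupp : ∀ x ∉ B, η x = 0)
    (hη : ∀ x, |η x| ≤ 1)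
    (hηbdry : ∀ x ∈ intBdry G B, η x = 0)
    (ζ : ℝ → ℝ) (hζ : ∀ t ∈ Set.Icc s₁ s₂, DifferentiableAt ℝ ζ t)
    (hζ' : BddAbove ((fun t ↦ |deriv ζ t|) '' Set.Icc s₁ s₂))
    (hζ01 : ∀ t ∈ Set.Icc s₁ s₂, ζ t ∈ Set.Icc 0 1) (hζs₁ : ζ s₁ = 0)
    (u : ℝ → V → ℝ) (hu : ∀ t ∈ Set.Icc s₁ s₂, ∀ x ∈ B, 0 ≤ u t x)
    (hsub : SubCaloric nbr ω (Set.Icc s₁ s₂) (B : Set V) u)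
    (α : ℝ) (hα : 1 ≤ α) :
    ((∫ t in s₁..s₂, ζ t * (energySq ω η (fun x => u t x ^ α) / (B.card : ℝ))) ≤
      64 * α ^ 2 * (gradSup G η ^ 2 + sSup ((fun t => |deriv ζ t|) '' Set.Icc s₁ s₂)) *
        ∫ t in s₁..s₂, nrmW B 1 (mu nbr ω) (fun x => u t x ^ (2 * α))) ∧
    (sSup ((fun t => ζ t * nrmW B 1 (mu nbr ω) (fun x => (η x * u t x ^ α) ^ 2)) ''
        Set.Icc s₁ s₂) ≤
      64 * α ^ 2 * (gradSup G η ^ 2 + sSup ((fun t => |deriv ζ t|) '' Set.Icc s₁ s₂)) *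
        ∫ t in s₁..s₂, nrmW B 1 (mu nbr ω) (fun x => u t x ^ (2 * α))) := by
  set Γ := gradSup G η
  set Z := sSup ((fun t ↦ |deriv ζ t|) '' Set.Icc s₁ s₂)
  have hZ : ∀ t ∈ Set.Icc s₁ s₂, |deriv ζ t| ≤ Z := fun t ht ↦ le_csSup hζ' ⟨t, ht, rfl⟩
  have hZ0 : 0 ≤ Z := (abs_nonneg _).trans (hZ s₁ (Set.left_mem_Icc.2 hs))
  have hΓ : ∀ x y, ω x y ≠ 0 → |η y - η x| ≤ Γ := fun x y h ↦
    abs_sub_le_gradSup hη (of_not_not (mt (hzero x y) h))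
  have hN0 : ∀ t, 0 ≤ nrmW B 1 (mu nbr ω) fun x ↦ u t x ^ (2 * α) := fun _ ↦
    nrmW_nonneg fun x _ ↦ mu_nonneg hω x
  obtain ⟨henergy, hnorm⟩ := integral_le_and_forall_le_of_add_integral_le hs
    (fun t ht ↦ mul_nonneg (hζ01 t ht).1 (nrmW_nonneg fun x _ ↦ mu_nonneg hω x))
    (fun t ht ↦ mul_nonneg (hζ01 t ht).1 (div_nonneg (energySq_nonneg hω _) (by positivity)))
    (fun t _ ↦ hN0 t) (by positivity)
    ((continuousOn_nrmW zero_le_one fun x hx ↦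
      hsub.continuousOn_rpow (by linarith) hx).intervalIntegrable_of_Icc hs)
    (fun t ht ↦ hsub.nrmW_add_integral_energySq_le hω hsymm
      (fun x y hy ↦ hzero x y (mt (hnbr x y).2 hy)) hηsupp hη
      (fun x _ ↦ eq_zero_or_weight_eq_zero_of_notMem hzero hηsupp hηbdry x) hΓ
      hζ hZ hζ01 hζs₁ hu hα ht)
  have hconst : 2 * α ^ 2 * Γ ^ 2 + Z ≤ 64 * α ^ 2 * (Γ ^ 2 + Z) := by
    nlinarith [mul_le_mul_of_nonneg_right (one_le_pow₀ (n := 2) hα) hZ0, sq_nonneg (α * Γ)]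
  have hbound := mul_le_mul_of_nonneg_right hconst
    (intervalIntegral.integral_nonneg (μ := volume) hs fun t _ ↦ hN0 t)
  refine ⟨henergy.trans hbound, csSup_le ((Set.nonempty_Icc.2 hs).image _) ?_⟩
  rintro _ ⟨t, ht, rfl⟩
  exact (hnorm t ht).trans hbound

open RCM in
/-- **Parabolic energy estimates** (Lemma 4.1). -/
theorem parabolic_energy_estimates
    {V : Type*} (G : SimpleGraph V) (nbr : V → Finset V)
    (hnbr : ∀ x y, y ∈ nbr x ↔ G.Adj x y)
    (ω : V → V → ℝ)
    (hsymm : ∀ x y, ω x y = ω y x)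
    (hpos : ∀ x y, G.Adj x y → 0 < ω x y)
    (hzero : ∀ x y, ¬ G.Adj x y → ω x y = 0)
    (s₁ s₂ : ℝ) (hs : s₁ ≤ s₂)
    (B : Finset V) (hBconn : (G.induce (B : Set V)).Connected)
    (η : V → ℝ)
    (hηsupp : ∀ x ∉ B, η x = 0)
    (hη01 : ∀ x, 0 ≤ η x ∧ η x ≤ 1)
    (hηbdry : ∀ x ∈ intBdry G B, η x = 0)
    (ζ : ℝ → ℝ) (hζC1 : ContDiff ℝ 1 ζ)
    (hζ01 : ∀ t, 0 ≤ ζ t ∧ ζ t ≤ 1)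
    (hζsupp : ∀ t ∉ Set.Icc s₁ s₂, ζ t = 0) (hζs₁ : ζ s₁ = 0)
    (u : ℝ → V → ℝ) (hu : ∀ t ∈ Set.Icc s₁ s₂, ∀ x, 0 < u t x)
    (hsub : SubCaloric nbr ω (Set.Icc s₁ s₂) (B : Set V) u)
    (α : ℝ) (hα : 1 ≤ α) :
    ((∫ t in s₁..s₂, ζ t * (energySq ω η (fun x => u t x ^ α) / (B.card : ℝ))) ≤
      64 * α ^ 2 * (gradSup G η ^ 2 + sSup ((fun t => |deriv ζ t|) '' Set.Icc s₁ s₂)) *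
        ∫ t in s₁..s₂, nrmW B 1 (mu nbr ω) (fun x => u t x ^ (2 * α))) ∧
    (sSup ((fun t => ζ t * nrmW B 1 (mu nbr ω) (fun x => (η x * u t x ^ α) ^ 2)) ''
        Set.Icc s₁ s₂) ≤
      64 * α ^ 2 * (gradSup G η ^ 2 + sSup ((fun t => |deriv ζ t|) '' Set.Icc s₁ s₂)) *
        ∫ t in s₁..s₂, nrmW B 1 (mu nbr ω) (fun x => u t x ^ (2 * α))) :=
  parabolic_energy_estimates_general G nbr hnbr ω hsymm (weight_nonneg hpos hzero) hzero s₁ s₂ hs B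
    (Finset.coe_nonempty.1 (Set.nonempty_coe_sort.1 hBconn.nonempty)) η hηsupp
    (fun x ↦ abs_le.2 ⟨by linarith [hη01 x], (hη01 x).2⟩) hηbdry ζ
    (fun t _ ↦ hζC1.differentiable one_ne_zero t)
    (isCompact_Icc.image (hζC1.continuous_deriv le_rfl).abs).bddAbove
    (fun t _ ↦ hζ01 t) hζs₁ u (fun t ht x _ ↦ (hu t ht x).le) hsub α hα
end
end
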